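/- 2 ∫_0^1 [K(√(1−t))]² K(√t) dt = [Γ(1/4)]⁸ / (192 π²). -/

import Mathlib

open Real MeasureTheory intervalIntegral

/-- Complete elliptic integral of the first kind. -/
noncomputable def ellipticK (k : ℝ) : ℝ :=
  ∫ θ in (0:ℝ)..(π/2), 1 / Real.sqrt (1 - k^2 * Real.sin θ ^ 2)

/-!
After `t ↦ 1 - t` the claim concerns `∫₀¹ K(√t)² K(√(1 - t)) dt`. As a function of the parameter
`m = k²`, `K` is holomorphic off `[1, ∞)`, and `K(m)² ((3 - 2i) K(1 - m) - i K(m))` is holomorphic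
in the lower half plane and `O(|m|^(-6/5))` at infinity, so its boundary values integrate to zero
over the real line. Taking real parts and folding `x < 0` with `x > 1` gives
`3 ∫₀¹ K(√t)² K(√(1 - t)) dt = ∫₀^∞ P² Q₀`, where `P` and `Q_n` are the Legendre functions
`(π/2) P_{-1/2}` and `Q_{n-1/2}` at `1 + 2z`. Since `P²` solves a third-order and `Q_n` a
second-order equation, their bilinear concomitant yields a two-term recurrence between the moments
`∫ P² Q_n` and `∫ P² Q_{n+2}`. Iterating it, the limit `k² ∫ P² Q_{2k+2} → π²/32` together with
Euler's limit formula for `Γ` evaluates `∫ P² Q₀`.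
-/

section

open Set Filter Topology

theorem hasDerivAt_intervalIntegral_of_continuousOn {𝕜 E : Type*} [RCLike 𝕜]
    [NormedAddCommGroup E] [NormedSpace ℝ E] [NormedSpace 𝕜 E] {F F' : 𝕜 → ℝ → E} {s : Set 𝕜}
    {a b : ℝ} {z : 𝕜} (hs : IsOpen s) (hz : z ∈ s)
    (hF : ∀ x ∈ s, ContinuousOn (F x) (uIcc a b))
    (hF' : ContinuousOn (Function.uncurry F') (s ×ˢ uIcc a b))
    (hderiv : ∀ x ∈ s, ∀ θ ∈ uIcc a b, HasDerivAt (F · θ) (F' x θ) x) :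
    HasDerivAt (fun x ↦ ∫ θ in a..b, F x θ) (∫ θ in a..b, F' z θ) z := by
  obtain ⟨K, hK, hKs, hKcompact⟩ := local_compact_nhds (hs.mem_nhds hz)
  obtain ⟨C, hC⟩ := (hKcompact.prod (isCompact_uIcc (a := a) (b := b))).exists_bound_of_continuousOn
    (hF'.mono (prod_mono hKs Subset.rfl))
  have hF'z : ContinuousOn (F' z) (uIcc a b) :=
    hF'.comp (f := fun θ : ℝ ↦ (z, θ)) (by fun_prop) fun θ hθ ↦ ⟨hz, hθ⟩
  refine (hasDerivAt_integral_of_dominated_loc_of_deriv_le (bound := fun _ ↦ C) hK ?_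
    (hF z hz).intervalIntegrable (hF'z.mono uIoc_subset_uIcc |>.aestronglyMeasurable
      measurableSet_uIoc) ?_ intervalIntegrable_const ?_).2
  · filter_upwards [hs.mem_nhds hz] with x hx
    exact ((hF x hx).mono uIoc_subset_uIcc).aestronglyMeasurable measurableSet_uIoc
  · exact Eventually.of_forall fun θ hθ x hx ↦ hC (x, θ) ⟨hx, uIoc_subset_uIcc hθ⟩
  · exact Eventually.of_forall fun θ hθ x hx ↦ hderiv x (hKs hx) θ (uIoc_subset_uIcc hθ)

theorem hasDerivAt_sin_sq (θ : ℝ) : HasDerivAt (fun θ ↦ sin θ ^ 2) (2 * (sin θ * cos θ)) θ :=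
  ((hasDerivAt_sin θ).fun_pow 2).congr_deriv (by norm_num; ring)

theorem hasDerivAt_sin_mul_cos (θ : ℝ) :
    HasDerivAt (fun θ ↦ sin θ * cos θ) (1 - 2 * sin θ ^ 2) θ :=
  ((hasDerivAt_sin θ).fun_mul (hasDerivAt_cos θ)).congr_deriv (by linarith [sin_sq_add_cos_sq θ])

theorem hasDerivAt_mul_one_add (z : ℝ) : HasDerivAt (fun z ↦ z * (1 + z)) (1 + 2 * z) z :=
  ((hasDerivAt_id' z).fun_mul ((hasDerivAt_id' z).const_add 1)).congr_deriv (by ring)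

theorem sin_mul_cos_sq (θ : ℝ) : (sin θ * cos θ) ^ 2 = sin θ ^ 2 * (1 - sin θ ^ 2) := by
  rw [mul_pow, cos_sq' θ]

/-- The Legendre function `(π / 2) P_{-1/2}(1 + 2 z)`, so that `ellipticK k = legendreP (-k ^ 2)`.
For `z < -1` the integrand is `0` wherever `1 + z sin² θ < 0`, which makes the integral the real
part of the boundary value of the analytic continuation. -/
noncomputable def legendreP (z : ℝ) : ℝ := ∫ θ in (0 : ℝ)..(π / 2), 1 / √(1 + z * sin θ ^ 2)

/-- The complete elliptic integral of the second kind, in the variable of `legendreP`. -/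
noncomputable def legendreE (z : ℝ) : ℝ := ∫ θ in (0 : ℝ)..(π / 2), √(1 + z * sin θ ^ 2)

/-- The quantity `z (1 + z) P'(z)`, where `P = legendreP`. -/
noncomputable def legendrePFlux (z : ℝ) : ℝ := (legendreE z - (1 + z) * legendreP z) / 2

section LegendreP

variable {z : ℝ}

theorem one_add_mul_sin_sq_pos (hz : 0 < z) (θ : ℝ) : 0 < 1 + z * sin θ ^ 2 := by positivity

theorem continuous_one_div_sqrt_one_add_mul_sin_sq (hz : 0 < z) :
    Continuous fun θ ↦ 1 / √(1 + z * sin θ ^ 2) :=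
  continuous_const.div (by fun_prop) fun θ ↦ (sqrt_pos.2 (one_add_mul_sin_sq_pos hz θ)).ne'

theorem legendreP_nonneg (z : ℝ) : 0 ≤ legendreP z :=
  integral_nonneg (by positivity) fun θ _ ↦ by positivity

theorem hasDerivAt_one_add_mul_sin_sq (z θ : ℝ) :
    HasDerivAt (fun z ↦ 1 + z * sin θ ^ 2) (sin θ ^ 2) z := by
  simpa using ((hasDerivAt_id' z).mul_const (sin θ ^ 2)).const_add 1

theorem hasDerivAt_legendreP_integral (hz : 0 < z) :
    HasDerivAt legendreP (∫ θ in (0 : ℝ)..(π / 2),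
      -(1 / 2) * (sin θ ^ 2 / (1 + z * sin θ ^ 2) / √(1 + z * sin θ ^ 2))) z := by
  refine hasDerivAt_intervalIntegral_of_continuousOn (F' := fun z θ ↦
    -(1 / 2) * (sin θ ^ 2 / (1 + z * sin θ ^ 2) / √(1 + z * sin θ ^ 2))) isOpen_Ioi hz
    (fun x hx ↦ (continuous_one_div_sqrt_one_add_mul_sin_sq hx).continuousOn) ?_ fun x hx θ _ ↦ ?_
  · refine continuousOn_const.mul (.div (.div (by fun_prop) (by fun_prop) ?_) (by fun_prop) ?_) <;>
    · rintro ⟨x, θ⟩ ⟨hx, -⟩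
      have := one_add_mul_sin_sq_pos hx θ
      positivity
  · have hv := one_add_mul_sin_sq_pos hx θ
    have hinv := ((hasDerivAt_one_add_mul_sin_sq x θ).sqrt hv.ne').fun_inv (sqrt_pos.2 hv).ne'
    simp only [one_div]
    refine hinv.congr_deriv ?_
    rw [sq_sqrt hv.le]
    field_simp

theorem hasDerivAt_legendreE_integral (hz : 0 < z) :
    HasDerivAt legendreE
      (∫ θ in (0 : ℝ)..(π / 2), sin θ ^ 2 / (2 * √(1 + z * sin θ ^ 2))) z := by
  refine hasDerivAt_intervalIntegral_of_continuousOn (F' := fun z θ ↦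
    sin θ ^ 2 / (2 * √(1 + z * sin θ ^ 2))) isOpen_Ioi hz (fun x _ ↦ by fun_prop) ?_
    fun x hx θ _ ↦
      (hasDerivAt_one_add_mul_sin_sq x θ).sqrt (one_add_mul_sin_sq_pos hx θ).ne'
  refine ContinuousOn.div (by fun_prop) (by fun_prop) ?_
  rintro ⟨x, θ⟩ ⟨hx, -⟩
  have := one_add_mul_sin_sq_pos hx θ
  positivity

theorem hasDerivAt_legendreE (hz : 0 < z) :
    HasDerivAt legendreE ((legendreE z - legendreP z) / (2 * z)) z := by
  refine (hasDerivAt_legendreE_integral hz).congr_deriv ?_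
  rw [eq_div_iff (by positivity), ← intervalIntegral.integral_mul_const, legendreE, legendreP,
    ← integral_sub (Continuous.intervalIntegrable (by fun_prop) _ _)
      ((continuous_one_div_sqrt_one_add_mul_sin_sq hz).intervalIntegrable _ _)]
  refine integral_congr fun θ _ ↦ ?_
  have hv := one_add_mul_sin_sq_pos hz θ
  rw [eq_sub_iff_add_eq, div_mul_eq_mul_div, div_add_div _ _ (by positivity) (by positivity),
    div_eq_iff (by positivity)]
  linear_combination -2 * √(1 + z * sin θ ^ 2) * sq_sqrt hv.le

theorem hasDerivAt_sin_mul_cos_div_sqrt (hz : 0 < z) (θ : ℝ) :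
    HasDerivAt (fun θ ↦ sin θ * cos θ / √(1 + z * sin θ ^ 2))
      (cos θ ^ 2 / √(1 + z * sin θ ^ 2)
        - (1 + z) * (sin θ ^ 2 / (1 + z * sin θ ^ 2) / √(1 + z * sin θ ^ 2))) θ := by
  have hv := one_add_mul_sin_sq_pos hz θ
  have hsqrt := (((hasDerivAt_sin_sq θ).const_mul z).const_add 1).sqrt hv.ne'
  refine ((hasDerivAt_sin_mul_cos θ).fun_div hsqrt (sqrt_pos.2 hv).ne').congr_deriv ?_
  rw [sq_sqrt hv.le, cos_sq']
  field_simp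
  rw [cos_sq', sq_sqrt (by linarith)]
  ring

theorem hasDerivAt_legendreP (hz : 0 < z) :
    HasDerivAt legendreP (legendrePFlux z / (z * (1 + z))) z := by
  have hcont := continuous_one_div_sqrt_one_add_mul_sin_sq hz
  have hv (θ : ℝ) := one_add_mul_sin_sq_pos hz θ
  have hcos : Continuous fun θ ↦ cos θ ^ 2 / √(1 + z * sin θ ^ 2) :=
    .div (by fun_prop) (by fun_prop) fun θ ↦ (sqrt_pos.2 (hv θ)).ne'
  have hsin : Continuous fun θ ↦ sin θ ^ 2 / (1 + z * sin θ ^ 2) / √(1 + z * sin θ ^ 2) :=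
    .div (.div (by fun_prop) (by fun_prop) fun θ ↦ (hv θ).ne') (by fun_prop)
      fun θ ↦ (sqrt_pos.2 (hv θ)).ne'
  have hparts := integral_eq_sub_of_hasDerivAt (a := 0) (b := π / 2)
    (fun θ _ ↦ hasDerivAt_sin_mul_cos_div_sqrt hz θ)
    ((hcos.sub (hsin.const_mul (1 + z))).intervalIntegrable _ _)
  rw [integral_sub (hcos.intervalIntegrable _ _) ((hsin.const_mul _).intervalIntegrable _ _),
    intervalIntegral.integral_const_mul] at hparts
  have hEP : legendreE z =
      (1 + z) * legendreP z - z * ∫ θ in (0 : ℝ)..(π / 2), cos θ ^ 2 / √(1 + z * sin θ ^ 2) := by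
    rw [legendreE, legendreP, ← intervalIntegral.integral_const_mul,
      ← intervalIntegral.integral_const_mul, ← integral_sub
        ((hcont.const_mul _).intervalIntegrable _ _) ((hcos.const_mul _).intervalIntegrable _ _)]
    congr! 2 with θ
    have := hv θ
    field_simp
    rw [sq_sqrt (hv θ).le, cos_sq']
    ring
  refine (hasDerivAt_legendreP_integral hz).congr_deriv ?_
  rw [eq_div_iff (by positivity), intervalIntegral.integral_const_mul, legendrePFlux]
  simp only [sin_zero, cos_pi_div_two, zero_mul, mul_zero, zero_div, sub_zero] at hparts
  linear_combination (-1 / 2) * hEP + z / 2 * hparts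

theorem hasDerivAt_legendrePFlux (hz : 0 < z) :
    HasDerivAt legendrePFlux (-(legendreP z / 4)) z := by
  have hP := ((hasDerivAt_id' z).const_add 1).fun_mul (hasDerivAt_legendreP hz)
  refine (((hasDerivAt_legendreE hz).fun_sub hP).div_const 2).congr_deriv ?_
  rw [legendrePFlux]
  field_simp
  ring

theorem legendreP_le_legendreE (hz : 0 < z) : legendreP z ≤ legendreE z := by
  refine integral_mono_on (by positivity)
    ((continuous_one_div_sqrt_one_add_mul_sin_sq hz).intervalIntegrable _ _)
    (Continuous.intervalIntegrable (by fun_prop) _ _) fun θ _ ↦ ?_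
  have hv := one_add_mul_sin_sq_pos hz θ
  rw [div_le_iff₀ (sqrt_pos.2 hv), mul_self_sqrt hv.le]
  exact le_add_of_nonneg_right (by positivity)

theorem legendreE_le_mul_legendreP (hz : 0 < z) : legendreE z ≤ (1 + z) * legendreP z := by
  rw [legendreP, ← intervalIntegral.integral_const_mul]
  refine integral_mono_on (by positivity) (Continuous.intervalIntegrable (by fun_prop) _ _)
    (((continuous_one_div_sqrt_one_add_mul_sin_sq hz).const_mul _).intervalIntegrable _ _)
    fun θ _ ↦ ?_
  have hv := one_add_mul_sin_sq_pos hz θ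
  rw [mul_one_div, le_div_iff₀ (sqrt_pos.2 hv), mul_self_sqrt hv.le]
  nlinarith [sin_sq_le_one θ]

theorem abs_legendrePFlux_le (hz : 0 < z) : |legendrePFlux z| ≤ z * legendreP z := by
  rw [legendrePFlux, abs_le]
  constructor <;>
    nlinarith [legendreP_le_legendreE hz, legendreE_le_mul_legendreP hz, legendreP_nonneg z]

end LegendreP

/-- Schläfli's integrand for the Legendre function of the second kind `Q_{n-1/2}(1 + 2 z)`. -/
noncomputable def legendreQKernel (n : ℕ) (z θ : ℝ) : ℝ :=
  (sin θ * cos θ) ^ (2 * n) / ((z + sin θ ^ 2) ^ n * √(z + sin θ ^ 2))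

/-- The Legendre function of the second kind `Q_{n-1/2}(1 + 2 z)`, for `0 < z`. -/
noncomputable def legendreQ (n : ℕ) (z : ℝ) : ℝ := ∫ θ in (0 : ℝ)..(π / 2), legendreQKernel n z θ

/-- The quantity `z (1 + z) Q'(z)`, where `Q = legendreQ (n + 1)`. -/
noncomputable def legendreQFlux (n : ℕ) (z : ℝ) : ℝ :=
  (n + 1 / 2) / 2 * ((1 + 2 * z) * legendreQ (n + 1) z - legendreQ n z)

section LegendreQ

variable (n : ℕ) {z : ℝ}

theorem add_sin_sq_pos (hz : 0 < z) (θ : ℝ) : 0 < z + sin θ ^ 2 := by positivity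

theorem legendreQKernel_nonneg (hz : 0 < z) (θ : ℝ) : 0 ≤ legendreQKernel n z θ :=
  div_nonneg (even_two_mul n |>.pow_nonneg _) (by positivity)

theorem legendreQ_nonneg (hz : 0 < z) : 0 ≤ legendreQ n z :=
  integral_nonneg (by positivity) fun θ _ ↦ legendreQKernel_nonneg n hz θ

theorem continuousOn_legendreQKernel :
    ContinuousOn (Function.uncurry (legendreQKernel n)) (Ioi 0 ×ˢ univ) := by
  refine ContinuousOn.div (by fun_prop) (by fun_prop) ?_
  rintro ⟨x, θ⟩ ⟨hx, -⟩
  have := add_sin_sq_pos hx θ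
  positivity

theorem continuous_legendreQKernel (hz : 0 < z) : Continuous (legendreQKernel n z) :=
  continuousOn_univ.1 <| (continuousOn_legendreQKernel n).comp (f := fun θ ↦ (z, θ)) (by fun_prop)
    fun _ _ ↦ ⟨hz, mem_univ _⟩

theorem continuous_legendreQKernel_div (hz : 0 < z) :
    Continuous fun θ ↦ legendreQKernel n z θ / (z + sin θ ^ 2) :=
  (continuous_legendreQKernel n hz).div (by fun_prop) fun θ ↦ (add_sin_sq_pos hz θ).ne'

theorem legendreQKernel_succ (z θ : ℝ) : legendreQKernel (n + 1) z θ =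
    (sin θ * cos θ) ^ 2 / (z + sin θ ^ 2) * legendreQKernel n z θ := by
  rw [legendreQKernel, legendreQKernel, div_mul_div_comm, ← mul_assoc, ← pow_succ', ← pow_add,
    mul_add_one, add_comm 2]

theorem natCast_mul_pow_sub_one {w : ℝ} (hw : w ≠ 0) : (n : ℝ) * w ^ (n - 1) = n * w ^ n / w := by
  cases n with
  | zero => simp
  | succ n => rw [Nat.add_sub_cancel, pow_succ]; field_simp

theorem hasDerivAt_inv_pow_mul_sqrt {w : ℝ} (hw : 0 < w) :
    HasDerivAt (fun w ↦ (w ^ n * √w)⁻¹) (-(n + 1 / 2) / (w ^ n * √w) / w) w := by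
  have hpow := (hasDerivAt_pow n w).fun_mul (hasDerivAt_sqrt hw.ne')
  refine (hpow.fun_inv (by positivity)).congr_deriv ?_
  rw [natCast_mul_pow_sub_one n hw.ne']
  field_simp
  rw [sq_sqrt hw.le]
  ring

theorem hasDerivAt_legendreQKernel (hz : 0 < z) (θ : ℝ) :
    HasDerivAt (legendreQKernel n · θ)
      (-(n + 1 / 2) * (legendreQKernel n z θ / (z + sin θ ^ 2))) z := by
  have hinv := (hasDerivAt_inv_pow_mul_sqrt n (add_sin_sq_pos hz θ)).comp z
    ((hasDerivAt_id' z).add_const (sin θ ^ 2))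
  refine (hinv.const_mul ((sin θ * cos θ) ^ (2 * n))).congr_deriv ?_
  rw [legendreQKernel]
  ring

theorem hasDerivAt_legendreQ_integral (hz : 0 < z) :
    HasDerivAt (legendreQ n) (-(n + 1 / 2) * ∫ θ in (0 : ℝ)..(π / 2),
      legendreQKernel n z θ / (z + sin θ ^ 2)) z := by
  rw [← intervalIntegral.integral_const_mul]
  refine hasDerivAt_intervalIntegral_of_continuousOn (F' := fun x θ ↦
    -(n + 1 / 2) * (legendreQKernel n x θ / (x + sin θ ^ 2))) isOpen_Ioi hz
    (fun x hx ↦ (continuous_legendreQKernel n hx).continuousOn) ?_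
    fun x hx θ _ ↦ hasDerivAt_legendreQKernel n hx θ
  refine continuousOn_const.mul (((continuousOn_legendreQKernel n).mono
    (prod_mono Subset.rfl (subset_univ _))).div (by fun_prop) ?_)
  rintro ⟨x, θ⟩ ⟨hx, -⟩
  exact (add_sin_sq_pos hx θ).ne'

theorem hasDerivAt_legendreQKernel_angle (hz : 0 < z) (θ : ℝ) :
    HasDerivAt (fun θ ↦ sin θ * cos θ * legendreQKernel n z θ)
      ((2 * n + 1) *
        ((1 - 2 * sin θ ^ 2) * legendreQKernel n z θ - legendreQKernel (n + 1) z θ)) θ := by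
  have hw := add_sin_sq_pos hz θ
  have hinv := (hasDerivAt_inv_pow_mul_sqrt n hw).comp θ ((hasDerivAt_sin_sq θ).const_add z)
  have hpow := (hasDerivAt_sin_mul_cos θ).fun_pow (2 * n + 1)
  refine ((hpow.fun_mul hinv).congr_deriv ?_).congr_of_eventuallyEq ?_
  · rw [legendreQKernel_succ, legendreQKernel, Nat.add_sub_cancel, Function.comp_apply]
    push_cast
    field_simp
    ring
  · exact Eventually.of_forall fun θ ↦ by simp only [legendreQKernel, Function.comp_apply]; ring

theorem hasDerivAt_legendreQKernel_div_angle (hz : 0 < z) (θ : ℝ) :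
    HasDerivAt (fun θ ↦ sin θ * cos θ * legendreQKernel n z θ / (z + sin θ ^ 2))
      (((2 * n + 1) * (1 - 2 * sin θ ^ 2) * legendreQKernel n z θ
        - (2 * n + 3) * legendreQKernel (n + 1) z θ) / (z + sin θ ^ 2)) θ := by
  have hw := add_sin_sq_pos hz θ
  refine ((hasDerivAt_legendreQKernel_angle n hz θ).fun_div
    ((hasDerivAt_sin_sq θ).const_add z) hw.ne').congr_deriv ?_
  rw [legendreQKernel_succ]
  field_simp
  ring

theorem integral_one_sub_mul_legendreQKernel (hz : 0 < z) :
    ∫ θ in (0 : ℝ)..(π / 2), (1 - 2 * sin θ ^ 2) * legendreQKernel n z θ =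
      legendreQ (n + 1) z := by
  have hcont (m : ℕ) := continuous_legendreQKernel m hz
  have hleft : Continuous fun θ ↦ (1 - 2 * sin θ ^ 2) * legendreQKernel n z θ :=
    .mul (by fun_prop) (hcont n)
  have hparts := integral_eq_sub_of_hasDerivAt (a := 0) (b := π / 2)
    (fun θ _ ↦ hasDerivAt_legendreQKernel_angle n hz θ)
    (((hleft.sub (hcont (n + 1))).const_mul (2 * n + 1 : ℝ)).intervalIntegrable _ _)
  rw [intervalIntegral.integral_const_mul, integral_sub (hleft.intervalIntegrable _ _)
    ((hcont (n + 1)).intervalIntegrable _ _)] at hparts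
  simpa [sub_eq_zero, show (2 * n + 1 : ℝ) ≠ 0 by positivity, legendreQ] using hparts

theorem integral_legendreQKernel_div_succ (hz : 0 < z) :
    (2 * n + 3) * ∫ θ in (0 : ℝ)..(π / 2), legendreQKernel (n + 1) z θ / (z + sin θ ^ 2) =
      (2 * n + 1) * ((1 + 2 * z) * (∫ θ in (0 : ℝ)..(π / 2),
        legendreQKernel n z θ / (z + sin θ ^ 2)) - 2 * legendreQ n z) := by
  have hcont (m : ℕ) := continuous_legendreQKernel_div m hz
  have hint (m : ℕ) (c : ℝ) := ((hcont m).const_mul c).intervalIntegrable (μ := volume) 0 (π / 2)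
  have hkernel := ((continuous_legendreQKernel n hz).const_mul (2 * (2 * n + 1) : ℝ)
    ).intervalIntegrable (μ := volume) 0 (π / 2)
  have hparts := integral_eq_sub_of_hasDerivAt (a := 0) (b := π / 2)
    (fun θ _ ↦ (hasDerivAt_legendreQKernel_div_angle n hz θ).congr_deriv
      (show _ = (2 * n + 1) * (1 + 2 * z) * (legendreQKernel n z θ / (z + sin θ ^ 2))
        - 2 * (2 * n + 1) * legendreQKernel n z θ
        - (2 * n + 3) * (legendreQKernel (n + 1) z θ / (z + sin θ ^ 2)) by
        have := add_sin_sq_pos hz θ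
        field_simp
        ring)) (((hint n _).sub hkernel).sub (hint (n + 1) _))
  rw [integral_sub ((hint n _).sub hkernel) (hint (n + 1) _), integral_sub (hint n _) hkernel]
    at hparts
  simp only [intervalIntegral.integral_const_mul, sin_zero, cos_pi_div_two, zero_mul, mul_zero,
    zero_div, sub_zero] at hparts
  rw [legendreQ]
  linear_combination -hparts

theorem mul_integral_legendreQKernel_div (hz : 0 < z) :
    z * (1 + z) * ∫ θ in (0 : ℝ)..(π / 2), legendreQKernel n z θ / (z + sin θ ^ 2) =
      ((1 + 2 * z) * legendreQ n z - legendreQ (n + 1) z) / 2 := by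
  have hcont (m : ℕ) := continuous_legendreQKernel m hz
  have hleft : Continuous fun θ ↦ (1 - 2 * sin θ ^ 2) * legendreQKernel n z θ :=
    .mul (by fun_prop) (hcont n)
  have hint (m : ℕ) (c : ℝ) := ((hcont m).const_mul c).intervalIntegrable (μ := volume) 0 (π / 2)
  have hquot := ((continuous_legendreQKernel_div n hz).const_mul (z * (1 + z))
    ).intervalIntegrable (μ := volume) 0 (π / 2)
  have hsucc : legendreQ (n + 1) z = ∫ θ in (0 : ℝ)..(π / 2),
      (1 / 2 * ((1 - 2 * sin θ ^ 2) * legendreQKernel n z θ)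
        + (1 + 2 * z) / 2 * legendreQKernel n z θ
        - z * (1 + z) * (legendreQKernel n z θ / (z + sin θ ^ 2))) := by
    refine integral_congr fun θ _ ↦ ?_
    have := add_sin_sq_pos hz θ
    simp only [legendreQKernel_succ, sin_mul_cos_sq]
    field_simp
    ring
  have hhalf := (hleft.const_mul (1 / 2)).intervalIntegrable (μ := volume) 0 (π / 2)
  rw [integral_sub (hhalf.add (hint n _)) hquot, integral_add hhalf (hint n _)] at hsucc
  simp only [intervalIntegral.integral_const_mul, integral_one_sub_mul_legendreQKernel n hz]
    at hsucc
  rw [← legendreQ] at hsucc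
  linear_combination hsucc

theorem hasDerivAt_legendreQ (hz : 0 < z) : HasDerivAt (legendreQ n)
    ((n + 1 / 2) * (legendreQ (n + 1) z - (1 + 2 * z) * legendreQ n z) /
      (2 * (z * (1 + z)))) z := by
  refine (hasDerivAt_legendreQ_integral n hz).congr_deriv ?_
  rw [eq_div_iff (by positivity)]
  linear_combination (-2 * n - 1) * mul_integral_legendreQKernel_div n hz

theorem hasDerivAt_legendreQ_succ (hz : 0 < z) :
    HasDerivAt (legendreQ (n + 1)) (legendreQFlux n z / (z * (1 + z))) z := by
  refine (hasDerivAt_legendreQ_integral (n + 1) hz).congr_deriv ?_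
  rw [eq_div_iff (by positivity), legendreQFlux]
  push_cast
  linear_combination -(z * (1 + z) / 2) * integral_legendreQKernel_div_succ n hz
    - (2 * n + 1) * (1 + 2 * z) / 2 * mul_integral_legendreQKernel_div n hz

theorem hasDerivAt_legendreQFlux (hz : 0 < z) :
    HasDerivAt (legendreQFlux n) ((n + 1 / 2) * (n + 3 / 2) * legendreQ (n + 1) z) z := by
  have hmul := (((hasDerivAt_id' z).const_mul 2).const_add 1).fun_mul
    (hasDerivAt_legendreQ_succ n hz)
  refine ((hmul.fun_sub (hasDerivAt_legendreQ n hz)).const_mul _).congr_deriv ?_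
  rw [legendreQFlux]
  field_simp
  ring

theorem legendreQ_succ_le_mul {c : ℝ} (hz : 0 < z)
    (hc : ∀ θ, (sin θ * cos θ) ^ 2 / (z + sin θ ^ 2) ≤ c) :
    legendreQ (n + 1) z ≤ c * legendreQ n z := by
  rw [legendreQ, legendreQ, ← intervalIntegral.integral_const_mul]
  refine integral_mono_on (by positivity)
    ((continuous_legendreQKernel _ hz).intervalIntegrable _ _)
    (((continuous_legendreQKernel _ hz).const_mul c).intervalIntegrable _ _) fun θ _ ↦ ?_
  rw [legendreQKernel_succ]
  exact mul_le_mul_of_nonneg_right (hc θ) (legendreQKernel_nonneg n hz θ)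

theorem sin_mul_cos_sq_le_sin_sq (θ : ℝ) : (sin θ * cos θ) ^ 2 ≤ sin θ ^ 2 := by
  rw [mul_pow]
  exact mul_le_of_le_one_right (sq_nonneg _) (cos_sq_le_one θ)

theorem legendreQ_succ_le (hz : 0 < z) : legendreQ (n + 1) z ≤ legendreQ n z := by
  refine (legendreQ_succ_le_mul n hz fun θ ↦ ?_).trans_eq (one_mul _)
  exact (div_le_one (add_sin_sq_pos hz θ)).2
    ((sin_mul_cos_sq_le_sin_sq θ).trans (le_add_of_nonneg_left hz.le))

theorem legendreQ_succ_le_div (hz : 0 < z) : legendreQ (n + 1) z ≤ legendreQ n z / z := by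
  rw [div_eq_inv_mul, ← one_div]
  refine legendreQ_succ_le_mul n hz fun θ ↦ ?_
  exact div_le_div₀ zero_le_one ((sin_mul_cos_sq_le_sin_sq θ).trans (sin_sq_le_one θ)) hz
    (le_add_of_nonneg_right (sq_nonneg _))

theorem antitone_legendreQ (hz : 0 < z) : Antitone (legendreQ · z) :=
  antitone_nat_of_succ_le fun n ↦ legendreQ_succ_le n hz

theorem abs_legendreQFlux_le (hz : 0 < z) :
    |legendreQFlux n z| ≤ (n + 3 / 2) * ((1 + z) * legendreQ (n + 1) z) := by
  have hderiv := (hasDerivAt_legendreQ_succ n hz).unique (hasDerivAt_legendreQ_integral (n + 1) hz)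
  rw [div_eq_iff (by positivity)] at hderiv
  have hle : ∫ θ in (0 : ℝ)..(π / 2), legendreQKernel (n + 1) z θ / (z + sin θ ^ 2) ≤
      legendreQ (n + 1) z / z := by
    rw [legendreQ, ← intervalIntegral.integral_div]
    refine integral_mono_on (by positivity)
      ((continuous_legendreQKernel_div (n + 1) hz).intervalIntegrable _ _)
      (((continuous_legendreQKernel (n + 1) hz).div_const z).intervalIntegrable _ _) fun θ _ ↦ ?_
    exact div_le_div_of_nonneg_left (legendreQKernel_nonneg (n + 1) hz θ) hz
      (le_add_of_nonneg_right (sq_nonneg _))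
  have hnonneg : 0 ≤ ∫ θ in (0 : ℝ)..(π / 2), legendreQKernel (n + 1) z θ / (z + sin θ ^ 2) :=
    integral_nonneg (by positivity) fun θ _ ↦
      div_nonneg (legendreQKernel_nonneg (n + 1) hz θ) (add_sin_sq_pos hz θ).le
  rw [hderiv, show ∀ D : ℝ, -(((n + 1 : ℕ) : ℝ) + 1 / 2) * D * (z * (1 + z)) =
    -((n + 3 / 2) * ((1 + z) * (z * D))) by intro D; push_cast; ring, abs_neg, abs_of_nonneg
    (by positivity)]
  rw [le_div_iff₀' hz] at hle
  gcongr

end LegendreQ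

/-- The integral of the weight that dominates every kernel in the estimates. -/
noncomputable def sinRpowIntegral : ℝ := ∫ θ in (0 : ℝ)..(π / 2), sin θ ^ (-(4 / 5) : ℝ)

section Bounds

theorem sin_pos_of_mem_Ioo {θ : ℝ} (hθ : θ ∈ Ioo 0 (π / 2)) : 0 < sin θ :=
  sin_pos_of_pos_of_lt_pi hθ.1 (hθ.2.trans (half_lt_self pi_pos))

theorem intervalIntegrable_sin_rpow {r : ℝ} (hr : -1 < r) (hr₀ : r ≤ 0) :
    IntervalIntegrable (fun θ ↦ sin θ ^ r) volume 0 (π / 2) := by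
  refine ((intervalIntegrable_rpow' hr).const_mul ((2 / π) ^ r)).mono_fun'
    (measurable_sin.pow_const _).aestronglyMeasurable ?_
  rw [uIoc_of_le (by positivity)]
  refine (ae_restrict_iff' measurableSet_Ioc).2 (.of_forall fun θ hθ ↦ ?_)
  have hle : 2 / π * θ ≤ sin θ := mul_le_sin hθ.1.le hθ.2
  have hpos : 0 < 2 / π * θ := mul_pos (by positivity) hθ.1
  simp only [norm_of_nonneg (rpow_nonneg (hpos.le.trans hle) r),
    ← mul_rpow (show 0 ≤ 2 / π by positivity) hθ.1.le]
  exact rpow_le_rpow_of_nonpos hpos hle hr₀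

theorem integral_le_mul_sinRpowIntegral {f : ℝ → ℝ} {c : ℝ}
    (hf : IntervalIntegrable f volume 0 (π / 2))
    (hle : ∀ θ ∈ Ioo 0 (π / 2), f θ ≤ c * sin θ ^ (-(4 / 5) : ℝ)) :
    ∫ θ in (0 : ℝ)..(π / 2), f θ ≤ c * sinRpowIntegral := by
  rw [sinRpowIntegral, ← intervalIntegral.integral_const_mul]
  exact integral_mono_on_of_le_Ioo (by positivity) hf
    ((intervalIntegrable_sin_rpow (by norm_num) (by norm_num)).const_mul c) hle

theorem sinRpowIntegral_nonneg : 0 ≤ sinRpowIntegral :=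
  integral_nonneg (by positivity) fun _ hθ ↦
    rpow_nonneg (sin_nonneg_of_nonneg_of_le_pi hθ.1 (hθ.2.trans (half_le_self pi_pos.le))) _

theorem one_div_sqrt_le_rpow_mul_rpow {p s v : ℝ} (hp : 0 < p) (hs : 0 < s) (hv : 0 < v)
    (hle : p ^ 2 * s ^ 8 ≤ v ^ 5) :
    1 / √v ≤ p ^ (-(1 / 5) : ℝ) * s ^ (-(4 / 5) : ℝ) :=
  calc 1 / √v = (v ^ 5) ^ (-(1 / 10) : ℝ) := by
        rw [← rpow_natCast, ← rpow_mul hv.le, sqrt_eq_rpow, one_div, ← rpow_neg hv.le]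
        norm_num
    _ ≤ (p ^ 2 * s ^ 8) ^ (-(1 / 10) : ℝ) :=
        rpow_le_rpow_of_nonpos (by positivity) hle (by norm_num)
    _ = p ^ (-(1 / 5) : ℝ) * s ^ (-(4 / 5) : ℝ) := by
        rw [mul_rpow (by positivity) (by positivity), ← rpow_natCast, ← rpow_natCast,
          ← rpow_mul hp.le, ← rpow_mul hs.le]
        norm_num

variable {z : ℝ}

theorem legendreP_le_rpow (hz : 0 < z) :
    legendreP z ≤ (z * (1 + z)) ^ (-(1 / 5) : ℝ) * sinRpowIntegral := by
  refine integral_le_mul_sinRpowIntegral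
    ((continuous_one_div_sqrt_one_add_mul_sin_sq hz).intervalIntegrable _ _) fun θ hθ ↦ ?_
  have hs := sin_pos_of_mem_Ioo hθ
  refine one_div_sqrt_le_rpow_mul_rpow (by positivity) hs (by positivity) ?_
  have hsin := sin_sq_le_one θ
  have hzs := mul_nonneg hz.le (sq_nonneg (sin θ))
  calc (z * (1 + z)) ^ 2 * sin θ ^ 8 ≤ ((1 + z) * (1 + z)) ^ 2 * sin θ ^ 8 := by gcongr; linarith
    _ = ((1 + z) * sin θ ^ 2) ^ 4 := by ring
    _ ≤ (1 + z * sin θ ^ 2) ^ 4 := by gcongr; linarith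
    _ ≤ (1 + z * sin θ ^ 2) ^ 5 := pow_le_pow_right₀ (by linarith) (by norm_num)

theorem legendreQ_le_rpow (n : ℕ) (hz : 0 < z) :
    legendreQ n z ≤ (z * (1 + z)) ^ (-(1 / 5) : ℝ) * sinRpowIntegral := by
  refine (antitone_legendreQ hz n.zero_le).trans (integral_le_mul_sinRpowIntegral
    ((continuous_legendreQKernel 0 hz).intervalIntegrable _ _) fun θ hθ ↦ ?_)
  have hs := sin_pos_of_mem_Ioo hθ
  simp only [legendreQKernel, mul_zero, pow_zero, one_mul]
  refine one_div_sqrt_le_rpow_mul_rpow (by positivity) hs (by positivity) ?_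
  have hsin := sin_sq_le_one θ
  calc (z * (1 + z)) ^ 2 * sin θ ^ 8
      = z ^ 2 * ((1 + z) * sin θ ^ 2) ^ 2 * sin θ ^ 2 * sin θ ^ 2 := by ring
    _ ≤ z ^ 2 * ((1 + z) * sin θ ^ 2) ^ 2 * sin θ ^ 2 * 1 := by gcongr
    _ ≤ (z + sin θ ^ 2) ^ 2 * (z + sin θ ^ 2) ^ 2 * (z + sin θ ^ 2) * 1 := by
        gcongr <;> nlinarith
    _ = (z + sin θ ^ 2) ^ 5 := by ring

theorem legendreP_sq_mul_legendreQ_le_rpow (n : ℕ) (hz : 0 < z) :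
    legendreP z ^ 2 * legendreQ n z ≤ (z * (1 + z)) ^ (-(3 / 5) : ℝ) * sinRpowIntegral ^ 3 := by
  have hrpow : (z * (1 + z)) ^ (-(3 / 5) : ℝ) = ((z * (1 + z)) ^ (-(1 / 5) : ℝ)) ^ 3 := by
    rw [← rpow_natCast, ← rpow_mul (by positivity)]
    norm_num
  have hP := legendreP_le_rpow hz
  have hQ := legendreQ_le_rpow n hz
  calc legendreP z ^ 2 * legendreQ n z
      ≤ ((z * (1 + z)) ^ (-(1 / 5) : ℝ) * sinRpowIntegral) ^ 2 *
        ((z * (1 + z)) ^ (-(1 / 5) : ℝ) * sinRpowIntegral) := by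
        gcongr
        exacts [legendreQ_nonneg n hz, legendreP_nonneg z]
    _ = _ := by rw [hrpow]; ring

theorem integrableOn_mul_one_add_rpow_neg {a : ℝ} (ha : 1 / 2 < a) (ha' : a < 1) :
    IntegrableOn (fun z : ℝ ↦ (z * (1 + z)) ^ (-a)) (Ioi 0) := by
  have hmeas : Measurable fun z : ℝ ↦ (z * (1 + z)) ^ (-a) := by fun_prop
  rw [← Ioc_union_Ioi_eq_Ioi (zero_le_one' ℝ)]
  refine IntegrableOn.union ?_ ?_
  · have hrpow : IntegrableOn (fun z : ℝ ↦ z ^ (-a)) (Ioc 0 1) :=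
      (intervalIntegrable_iff_integrableOn_Ioc_of_le zero_le_one).1
        (intervalIntegrable_rpow' (by linarith))
    refine hrpow.mono' hmeas.aestronglyMeasurable
      ((ae_restrict_iff' measurableSet_Ioc).2 (.of_forall fun z hz ↦ ?_))
    have hz₀ : 0 < z := hz.1
    rw [norm_of_nonneg (by positivity)]
    exact rpow_le_rpow_of_nonpos hz₀ (by nlinarith) (by linarith)
  · refine (integrableOn_Ioi_rpow_of_lt (a := -(2 * a)) (by linarith) one_pos).mono'
      hmeas.aestronglyMeasurable
      ((ae_restrict_iff' measurableSet_Ioi).2 (.of_forall fun z hz ↦ ?_))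
    have hz₀ : 0 < z := one_pos.trans hz
    rw [norm_of_nonneg (by positivity), show -(2 * a) = ((2 : ℕ) : ℝ) * -a by push_cast; ring,
      rpow_natCast_mul hz₀.le]
    exact rpow_le_rpow_of_nonpos (by positivity) (by nlinarith) (by linarith)

theorem continuousOn_legendreP : ContinuousOn legendreP (Ioi 0) :=
  fun _ hz ↦ (hasDerivAt_legendreP hz).continuousAt.continuousWithinAt

theorem continuousOn_legendreQ (n : ℕ) : ContinuousOn (legendreQ n) (Ioi 0) :=
  fun _ hz ↦ (hasDerivAt_legendreQ n hz).continuousAt.continuousWithinAt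

theorem integrableOn_legendreP_sq_mul_legendreQ (n : ℕ) :
    IntegrableOn (fun z ↦ legendreP z ^ 2 * legendreQ n z) (Ioi 0) := by
  refine ((integrableOn_mul_one_add_rpow_neg (a := 3 / 5) (by norm_num) (by norm_num)).mul_const
    (sinRpowIntegral ^ 3)).mono' (((continuousOn_legendreP.pow 2).mul
      (continuousOn_legendreQ n)).aestronglyMeasurable measurableSet_Ioi)
    ((ae_restrict_iff' measurableSet_Ioi).2 (.of_forall fun z hz ↦ ?_))
  rw [norm_of_nonneg (mul_nonneg (sq_nonneg _) (legendreQ_nonneg n hz))]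
  exact legendreP_sq_mul_legendreQ_le_rpow n hz

end Bounds

section Recurrence

variable (n : ℕ) {z : ℝ}

/-- The moment `∫ P² Q_n` over `0 < z`, where `P = legendreP` and `Q_n = legendreQ n`. -/
noncomputable def legendreMoment : ℝ := ∫ z in Ioi (0 : ℝ), legendreP z ^ 2 * legendreQ n z

/-- With `p = z (1 + z)`, `u = P²` and `Q = Q_{n+1}`, this is the bilinear concomitant
`p ((p u')' Q - u' (p Q') + u (p Q')' + u Q)` of the third-order equation satisfied by `u`. It is an
antiderivative of a combination of the integrands of the moments of index `n` and `n + 2`. -/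
noncomputable def legendreConcomitant (z : ℝ) : ℝ :=
  (2 * legendrePFlux z ^ 2 - 1 / 2 * (z * (1 + z)) * legendreP z ^ 2) * legendreQ (n + 1) z
    - 2 * legendreP z * legendrePFlux z * legendreQFlux n z
    + ((n + 1 / 2) * (n + 3 / 2) + 1) * (z * (1 + z)) * legendreP z ^ 2 * legendreQ (n + 1) z

theorem hasDerivAt_legendreConcomitant (hz : 0 < z) :
    HasDerivAt (legendreConcomitant n)
      (1 / (4 * (n + 1)) * ((n + 3 / 2) ^ 4 * (legendreP z ^ 2 * legendreQ (n + 2) z)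
        - (n + 1 / 2) ^ 4 * (legendreP z ^ 2 * legendreQ n z))) z := by
  have hp := hasDerivAt_mul_one_add z
  have hP := hasDerivAt_legendreP hz
  have hA := hasDerivAt_legendrePFlux hz
  have hQ := hasDerivAt_legendreQ_succ n hz
  have hW := hasDerivAt_legendreQFlux n hz
  have hunique := (hasDerivAt_legendreQ_succ n hz).unique (hasDerivAt_legendreQ (n + 1) hz)
  have hthree_term : (n + 3 / 2) * legendreQ (n + 2) z =
      2 * legendreQFlux n z + (n + 3 / 2) * (1 + 2 * z) * legendreQ (n + 1) z := by
    rw [div_eq_div_iff (by positivity) (by positivity)] at hunique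
    refine mul_left_cancel₀ (show z * (1 + z) ≠ 0 by positivity) ?_
    push_cast at hunique
    linear_combination -hunique
  have hsq := ((hA.fun_pow 2).const_mul 2).fun_sub ((hp.const_mul (1 / 2)).fun_mul (hP.fun_pow 2))
  have hB := ((hsq.fun_mul hQ).fun_sub (((hP.const_mul 2).fun_mul hA).fun_mul hW)).fun_add
    (((hp.const_mul ((n + 1 / 2) * (n + 3 / 2) + 1 : ℝ)).fun_mul (hP.fun_pow 2)).fun_mul hQ)
  refine hB.congr_deriv ?_
  have hQ_add_two : legendreQ (n + 2) z =
      2 * legendreQFlux n z / (n + 3 / 2) + (1 + 2 * z) * legendreQ (n + 1) z := by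
    rw [div_add' _ _ _ (by positivity), eq_div_iff (by positivity)]
    linear_combination hthree_term
  have hQ_zero : legendreQ n z =
      (1 + 2 * z) * legendreQ (n + 1) z - 2 * legendreQFlux n z / (n + 1 / 2) := by
    rw [legendreQFlux]
    field_simp
    ring
  rw [hQ_add_two, hQ_zero]
  field_simp
  ring

theorem abs_legendreConcomitant_le (hz : 0 < z) : |legendreConcomitant n z| ≤
    (n + 3) ^ 2 * (z * (1 + z) * (legendreP z ^ 2 * legendreQ (n + 1) z)) := by
  have hP := legendreP_nonneg z
  have hQ := legendreQ_nonneg (n + 1) hz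
  have hA := abs_legendrePFlux_le hz
  have hA_sq : legendrePFlux z ^ 2 ≤ z * (1 + z) * legendreP z ^ 2 :=
    calc legendrePFlux z ^ 2 ≤ (z * legendreP z) ^ 2 := sq_le_sq' (abs_le.1 hA).1 (abs_le.1 hA).2
      _ = z * z * legendreP z ^ 2 := by ring
      _ ≤ z * (1 + z) * legendreP z ^ 2 := by gcongr; linarith
  have hfirst : |(2 * legendrePFlux z ^ 2 - 1 / 2 * (z * (1 + z)) * legendreP z ^ 2) *
      legendreQ (n + 1) z| ≤ 5 / 2 * (z * (1 + z) * (legendreP z ^ 2 * legendreQ (n + 1) z)) :=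
    calc _ ≤ 5 / 2 * (z * (1 + z) * legendreP z ^ 2) * legendreQ (n + 1) z := by
          rw [abs_mul, abs_of_nonneg hQ]
          gcongr
          rw [abs_le]
          constructor <;> nlinarith [sq_nonneg (legendrePFlux z)]
      _ = _ := by ring
  have hsecond : |2 * legendreP z * legendrePFlux z * legendreQFlux n z| ≤
      2 * (n + 3 / 2) * (z * (1 + z) * (legendreP z ^ 2 * legendreQ (n + 1) z)) :=
    calc _ ≤ 2 * legendreP z * (z * legendreP z) *
          ((n + 3 / 2) * ((1 + z) * legendreQ (n + 1) z)) := by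
          rw [abs_mul, abs_mul, abs_of_nonneg (by positivity : 0 ≤ 2 * legendreP z)]
          have := abs_legendreQFlux_le n hz
          gcongr
      _ = _ := by ring
  have hpPQ : 0 ≤ z * (1 + z) * (legendreP z ^ 2 * legendreQ (n + 1) z) := by positivity
  rw [legendreConcomitant, abs_le]
  constructor <;> nlinarith [abs_le.1 hfirst, abs_le.1 hsecond]

theorem abs_legendreConcomitant_le_rpow (hz : 0 < z) : |legendreConcomitant n z| ≤
    (n + 3) ^ 2 * sinRpowIntegral ^ 3 * (z * (1 + z)) ^ (2 / 5 : ℝ) :=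
  calc |legendreConcomitant n z|
      ≤ (n + 3) ^ 2 * (z * (1 + z) * ((z * (1 + z)) ^ (-(3 / 5) : ℝ) * sinRpowIntegral ^ 3)) := by
        grw [abs_legendreConcomitant_le n hz, legendreP_sq_mul_legendreQ_le_rpow (n + 1) hz]
    _ = (n + 3) ^ 2 * sinRpowIntegral ^ 3 * (z * (1 + z)) ^ (1 + -(3 / 5) : ℝ) := by
        rw [rpow_one_add' (by positivity) (by norm_num)]
        ring
    _ = _ := by norm_num

theorem abs_legendreConcomitant_le_rpow_of_one_le (hz : 1 ≤ z) : |legendreConcomitant n z| ≤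
    2 * (n + 3) ^ 2 * sinRpowIntegral ^ 3 * z ^ (-(1 / 5) : ℝ) := by
  have hz₀ : 0 < z := one_pos.trans_le hz
  have hC := sinRpowIntegral_nonneg
  have hrpow : (z * (1 + z)) ^ (-(3 / 5) : ℝ) ≤ z ^ (-(6 / 5) : ℝ) :=
    calc (z * (1 + z)) ^ (-(3 / 5) : ℝ) ≤ (z ^ 2) ^ (-(3 / 5) : ℝ) :=
          rpow_le_rpow_of_nonpos (by positivity) (by nlinarith) (by norm_num)
      _ = z ^ (-(6 / 5) : ℝ) := by
          rw [← rpow_natCast, ← rpow_mul hz₀.le]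
          norm_num
  calc |legendreConcomitant n z|
      ≤ (n + 3) ^ 2 * (z * (1 + z) * (legendreP z ^ 2 * (legendreQ n z / z))) := by
        grw [abs_legendreConcomitant_le n hz₀, legendreQ_succ_le_div n hz₀]
    _ = (n + 3) ^ 2 * ((1 + z) * (legendreP z ^ 2 * legendreQ n z)) := by field_simp
    _ ≤ (n + 3) ^ 2 * ((z + z) * (z ^ (-(6 / 5) : ℝ) * sinRpowIntegral ^ 3)) := by
        grw [legendreP_sq_mul_legendreQ_le_rpow n hz₀, hrpow, hz]
    _ = 2 * (n + 3) ^ 2 * sinRpowIntegral ^ 3 * z ^ (1 + -(6 / 5) : ℝ) := by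
        rw [rpow_one_add' hz₀.le (by norm_num)]
        ring
    _ = _ := by norm_num

theorem legendreConcomitant_zero : legendreConcomitant n 0 = 0 := by
  simp [legendreConcomitant, legendrePFlux, legendreE, legendreP]

theorem continuousWithinAt_legendreConcomitant_zero :
    ContinuousWithinAt (legendreConcomitant n) (Ici 0) 0 := by
  have hbound : Continuous fun z : ℝ ↦
      (n + 3) ^ 2 * sinRpowIntegral ^ 3 * (z * (1 + z)) ^ (2 / 5 : ℝ) :=
    continuous_const.mul (.rpow_const (by fun_prop) fun _ ↦ .inr (by norm_num))
  have hlim := hbound.continuousWithinAt (s := Ici 0) (x := 0)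
  simp only [ContinuousWithinAt, zero_mul, zero_rpow (show (2 / 5 : ℝ) ≠ 0 by norm_num),
    mul_zero] at hlim
  rw [ContinuousWithinAt, legendreConcomitant_zero]
  refine squeeze_zero_norm' ?_ hlim
  filter_upwards [self_mem_nhdsWithin] with z hz
  obtain rfl | hz := (mem_Ici.1 hz).eq_or_lt
  · simp [legendreConcomitant_zero]
  · exact abs_legendreConcomitant_le_rpow n hz

theorem tendsto_legendreConcomitant_atTop : Tendsto (legendreConcomitant n) atTop (𝓝 0) := by
  have hlim := (tendsto_rpow_neg_atTop (y := 1 / 5) (by norm_num)).const_mul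
    (2 * (n + 3) ^ 2 * sinRpowIntegral ^ 3)
  rw [mul_zero] at hlim
  refine squeeze_zero_norm' ?_ hlim
  filter_upwards [eventually_ge_atTop 1] with z hz
  exact abs_legendreConcomitant_le_rpow_of_one_le n hz

theorem legendreMoment_add_two :
    (n + 3 / 2) ^ 4 * legendreMoment (n + 2) = (n + 1 / 2) ^ 4 * legendreMoment n := by
  have hnext := (integrableOn_legendreP_sq_mul_legendreQ (n + 2)).const_mul ((n + 3 / 2 : ℝ) ^ 4)
  have hprev := (integrableOn_legendreP_sq_mul_legendreQ n).const_mul ((n + 1 / 2 : ℝ) ^ 4)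
  have htotal := integral_Ioi_of_hasDerivAt_of_tendsto
    (continuousWithinAt_legendreConcomitant_zero n)
    (fun z hz ↦ hasDerivAt_legendreConcomitant n hz)
    ((hnext.sub hprev).const_mul (1 / (4 * (n + 1)))) (tendsto_legendreConcomitant_atTop n)
  rw [legendreConcomitant_zero, sub_zero, MeasureTheory.integral_const_mul,
    MeasureTheory.integral_sub hnext hprev, MeasureTheory.integral_const_mul,
    MeasureTheory.integral_const_mul] at htotal
  exact sub_eq_zero.1 ((mul_eq_zero.1 htotal).resolve_left (by positivity))

end Recurrence

section Asymptotics

theorem tendsto_inv_pow_mul_sqrt_atTop (n : ℕ) :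
    Tendsto (fun w : ℝ ↦ (w ^ n * √w)⁻¹) atTop (𝓝 0) := by
  refine tendsto_inv_atTop_zero.comp (tendsto_atTop_mono' atTop ?_ tendsto_sqrt_atTop)
  filter_upwards [eventually_ge_atTop 1] with w hw
  exact le_mul_of_one_le_left (sqrt_nonneg w) (one_le_pow₀ hw)

/-- An antiderivative of `legendreQKernel (n + 1) · θ`. -/
noncomputable def legendreQKernelPrimitive (n : ℕ) (z θ : ℝ) : ℝ :=
  -((sin θ * cos θ) ^ (2 * (n + 1)) / (n + 1 / 2)
    * ((z + sin θ ^ 2) ^ n * √(z + sin θ ^ 2))⁻¹)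

theorem hasDerivAt_legendreQKernelPrimitive (n : ℕ) {z θ : ℝ} (hw : 0 < z + sin θ ^ 2) :
    HasDerivAt (legendreQKernelPrimitive n · θ) (legendreQKernel (n + 1) z θ) z := by
  have hinv := (hasDerivAt_inv_pow_mul_sqrt n hw).comp z
    ((hasDerivAt_id' z).add_const (sin θ ^ 2))
  refine (hinv.const_mul ((sin θ * cos θ) ^ (2 * (n + 1)) / (n + 1 / 2))).neg.congr_deriv ?_
  rw [legendreQKernel]
  field_simp
  ring

theorem tendsto_legendreQKernelPrimitive_atTop (n : ℕ) (θ : ℝ) :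
    Tendsto (legendreQKernelPrimitive n · θ) atTop (𝓝 0) := by
  have hlim := ((tendsto_inv_pow_mul_sqrt_atTop n).comp (tendsto_atTop_add_const_right atTop
    (sin θ ^ 2) tendsto_id)).const_mul ((sin θ * cos θ) ^ (2 * (n + 1)) / (n + 1 / 2))
  rw [mul_zero] at hlim
  exact neg_zero (G := ℝ) ▸ hlim.neg

theorem integrableOn_legendreQKernel_succ (n : ℕ) {θ : ℝ} (hs : 0 < sin θ) :
    IntegrableOn (legendreQKernel (n + 1) · θ) (Ioi 0) :=
  integrableOn_Ioi_deriv_of_nonneg' (fun z hz ↦ hasDerivAt_legendreQKernelPrimitive n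
    (add_pos_of_nonneg_of_pos hz (by positivity)))
    (fun _ hz ↦ legendreQKernel_nonneg _ hz θ) (tendsto_legendreQKernelPrimitive_atTop n θ)

theorem integral_legendreQKernel_succ (n : ℕ) {θ : ℝ} (hs : 0 < sin θ) :
    ∫ z in Ioi (0 : ℝ), legendreQKernel (n + 1) z θ =
      sin θ * cos θ ^ (2 * n + 2) / (n + 1 / 2) := by
  rw [integral_Ioi_of_hasDerivAt_of_nonneg' (fun z hz ↦ hasDerivAt_legendreQKernelPrimitive n
    (add_pos_of_nonneg_of_pos hz (by positivity)))
    (fun _ hz ↦ legendreQKernel_nonneg _ hz θ) (tendsto_legendreQKernelPrimitive_atTop n θ)]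
  simp only [legendreQKernelPrimitive, zero_add, sqrt_sq hs.le]
  field_simp
  ring

section Fubini

variable (n : ℕ) {g : ℝ → ℝ}

theorem integrable_mul_legendreQKernel_prod (hg : Continuous g) :
    Integrable (fun p : ℝ × ℝ ↦ g p.2 * legendreQKernel (n + 1) p.1 p.2)
      ((volume.restrict (Ioi 0)).prod (volume.restrict (Ioc 0 (π / 2)))) := by
  have hmeas : Measurable fun p : ℝ × ℝ ↦ g p.2 * legendreQKernel (n + 1) p.1 p.2 := by
    have := hg.measurable
    unfold legendreQKernel
    fun_prop
  have hsin {θ : ℝ} (hθ : θ ∈ Ioc 0 (π / 2)) : 0 < sin θ :=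
    sin_pos_of_pos_of_lt_pi hθ.1 (hθ.2.trans_lt (half_lt_self pi_pos))
  refine (integrable_prod_iff' hmeas.aestronglyMeasurable).2
    ⟨(ae_restrict_iff' measurableSet_Ioc).2 (.of_forall fun θ hθ ↦
      (integrableOn_legendreQKernel_succ n (hsin hθ)).const_mul (g θ)), ?_⟩
  have hcont : Continuous fun θ ↦ |g θ| * (sin θ * cos θ ^ (2 * n + 2) / (n + 1 / 2)) := by
    fun_prop
  refine (hcont.integrableOn_Ioc (μ := volume)).congr
    ((ae_restrict_iff' measurableSet_Ioc).2 (.of_forall fun θ hθ ↦ ?_))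
  simp only [← integral_legendreQKernel_succ n (hsin hθ), norm_mul, norm_eq_abs (g θ),
    MeasureTheory.integral_const_mul]
  congr 1
  exact setIntegral_congr_fun measurableSet_Ioi fun z hz ↦
    (norm_of_nonneg (legendreQKernel_nonneg _ hz θ)).symm

theorem integrableOn_integral_mul_legendreQKernel (hg : Continuous g) :
    IntegrableOn (fun z ↦ ∫ θ in (0 : ℝ)..(π / 2), g θ * legendreQKernel (n + 1) z θ)
      (Ioi 0) := by
  simp only [intervalIntegral.integral_of_le (show 0 ≤ π / 2 by positivity)]
  exact (integrable_mul_legendreQKernel_prod n hg).integral_prod_left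

theorem integral_integral_mul_legendreQKernel (hg : Continuous g) :
    ∫ z in Ioi (0 : ℝ), ∫ θ in (0 : ℝ)..(π / 2), g θ * legendreQKernel (n + 1) z θ =
      ∫ θ in (0 : ℝ)..(π / 2), g θ * (sin θ * cos θ ^ (2 * n + 2) / (n + 1 / 2)) := by
  simp only [intervalIntegral.integral_of_le (show 0 ≤ π / 2 by positivity)]
  rw [integral_integral_swap (integrable_mul_legendreQKernel_prod n hg)]
  refine setIntegral_congr_fun measurableSet_Ioc fun θ hθ ↦ ?_
  have hs := sin_pos_of_pos_of_lt_pi hθ.1 (hθ.2.trans_lt (half_lt_self pi_pos))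
  simp only [MeasureTheory.integral_const_mul, integral_legendreQKernel_succ n hs]

end Fubini

theorem integral_sin_mul_cos_pow (k : ℕ) :
    ∫ θ in (0 : ℝ)..(π / 2), sin θ * cos θ ^ k = 1 / (k + 1) := by
  simpa using integral_sin_pow_odd_mul_cos_pow (a := 0) (b := π / 2) 0 k

theorem integrableOn_legendreQ_succ (n : ℕ) : IntegrableOn (legendreQ (n + 1)) (Ioi 0) := by
  have hint := integrableOn_integral_mul_legendreQKernel n (g := 1) continuous_const
  simp only [Pi.one_apply, one_mul] at hint
  exact hint

theorem integral_legendreQ_succ (n : ℕ) :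
    ∫ z in Ioi (0 : ℝ), legendreQ (n + 1) z = 1 / ((n + 1 / 2) * (2 * n + 3)) := by
  have hswap := integral_integral_mul_legendreQKernel n (g := 1) continuous_const
  simp only [Pi.one_apply, one_mul, intervalIntegral.integral_div, integral_sin_mul_cos_pow]
    at hswap
  refine hswap.trans ?_
  push_cast
  field_simp
  ring

theorem mul_legendreQKernel_succ_le (n : ℕ) {z : ℝ} (hz : 0 < z) (θ : ℝ) :
    z * legendreQKernel (n + 1) z θ ≤ (sin θ * cos θ) ^ 2 * legendreQKernel n z θ := by
  have hkernel := legendreQKernel_nonneg n hz θ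
  have hw := add_sin_sq_pos hz θ
  have hz_le : z ≤ z + sin θ ^ 2 := le_add_of_nonneg_right (sq_nonneg _)
  rw [legendreQKernel_succ]
  calc _ = z / (z + sin θ ^ 2) * ((sin θ * cos θ) ^ 2 * legendreQKernel n z θ) := by ring
    _ ≤ 1 * ((sin θ * cos θ) ^ 2 * legendreQKernel n z θ) := by
        gcongr
        exact (div_le_one hw).2 hz_le
    _ = _ := one_mul _

theorem mul_legendreQ_succ_le (n : ℕ) {z : ℝ} (hz : 0 < z) : z * legendreQ (n + 1) z ≤
    ∫ θ in (0 : ℝ)..(π / 2), (sin θ * cos θ) ^ 2 * legendreQKernel n z θ := by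
  rw [legendreQ, ← intervalIntegral.integral_const_mul]
  exact integral_mono_on (by positivity)
    (((continuous_legendreQKernel _ hz).const_mul z).intervalIntegrable _ _)
    ((Continuous.mul (by fun_prop) (continuous_legendreQKernel n hz)).intervalIntegrable _ _)
    fun θ _ ↦ mul_legendreQKernel_succ_le n hz θ

theorem integrableOn_mul_legendreQ_add_two (n : ℕ) :
    IntegrableOn (fun z ↦ z * legendreQ (n + 2) z) (Ioi 0) := by
  refine (integrableOn_integral_mul_legendreQKernel n (g := fun θ ↦ (sin θ * cos θ) ^ 2)
    (by fun_prop)).mono' ((continuousOn_id.mul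
      (continuousOn_legendreQ (n + 2))).aestronglyMeasurable measurableSet_Ioi)
    ((ae_restrict_iff' measurableSet_Ioi).2 (.of_forall fun z hz ↦ ?_))
  rw [norm_of_nonneg (mul_nonneg (mem_Ioi.1 hz).le (legendreQ_nonneg _ hz))]
  exact mul_legendreQ_succ_le (n + 1) hz

theorem integral_mul_legendreQ_add_two_le (n : ℕ) : ∫ z in Ioi (0 : ℝ), z * legendreQ (n + 2) z ≤
    1 / (n + 1 / 2) * (1 / (2 * n + 5) - 1 / (2 * n + 7)) := by
  have hweight : Continuous fun θ ↦ (sin θ * cos θ) ^ 2 := by fun_prop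
  have hint (k : ℕ) := Continuous.intervalIntegrable
    (show Continuous fun θ ↦ sin θ * cos θ ^ k by fun_prop) (μ := volume) 0 (π / 2)
  calc _ ≤ _ := setIntegral_mono_on (integrableOn_mul_legendreQ_add_two n)
        (integrableOn_integral_mul_legendreQKernel n hweight) measurableSet_Ioi
        fun z hz ↦ mul_legendreQ_succ_le (n + 1) hz
    _ = ∫ θ in (0 : ℝ)..(π / 2), 1 / (n + 1 / 2 : ℝ) *
          (sin θ * cos θ ^ (2 * n + 4) - sin θ * cos θ ^ (2 * n + 6)) := by
        rw [integral_integral_mul_legendreQKernel n hweight]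
        refine integral_congr fun θ _ ↦ ?_
        simp only [mul_pow, sin_sq]
        ring
    _ = _ := by
        rw [intervalIntegral.integral_const_mul, integral_sub (hint _) (hint _),
          integral_sin_mul_cos_pow, integral_sin_mul_cos_pow]
        push_cast
        ring

theorem legendreP_le_pi_div_two {z : ℝ} (hz : 0 < z) : legendreP z ≤ π / 2 := by
  have hle : legendreP z ≤ ∫ _ in (0 : ℝ)..(π / 2), (1 : ℝ) := by
    refine integral_mono_on (by positivity)
      ((continuous_one_div_sqrt_one_add_mul_sin_sq hz).intervalIntegrable _ _) (by simp)
      fun θ _ ↦ div_le_one_of_le₀ (one_le_sqrt.2 ?_) (sqrt_nonneg _)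
    exact le_add_of_nonneg_right (by positivity)
  simpa using hle

theorem pi_div_two_mul_le_legendreP {z : ℝ} (hz : 0 < z) :
    π / 2 * (1 - z / 2) ≤ legendreP z := by
  have hle : ∫ _ in (0 : ℝ)..(π / 2), (1 - z / 2) ≤ legendreP z := by
    refine integral_mono_on (by positivity) (by simp)
      ((continuous_one_div_sqrt_one_add_mul_sin_sq hz).intervalIntegrable _ _) fun θ _ ↦ ?_
    have hsqrt : √(1 + z * sin θ ^ 2) ≤ 1 + z / 2 := by
      rw [sqrt_le_left (by positivity)]
      nlinarith [sin_sq_le_one θ]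
    calc 1 - z / 2 ≤ 1 / (1 + z / 2) := by rw [le_div_iff₀ (by positivity)]; nlinarith
      _ ≤ 1 / √(1 + z * sin θ ^ 2) := by
          have := one_add_mul_sin_sq_pos hz θ
          gcongr
  rwa [intervalIntegral.integral_const, smul_eq_mul, sub_zero] at hle

theorem legendreP_sq_ge {z : ℝ} (hz : 0 < z) : (π / 2) ^ 2 * (1 - z) ≤ legendreP z ^ 2 := by
  have hpi : 0 < (π / 2) ^ 2 := by positivity
  obtain hle | hlt := le_or_gt 1 z
  · exact (mul_nonpos_of_nonneg_of_nonpos hpi.le (by linarith)).trans (sq_nonneg _)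
  · calc (π / 2) ^ 2 * (1 - z) ≤ (π / 2 * (1 - z / 2)) ^ 2 := by
          rw [mul_pow]
          gcongr
          nlinarith
      _ ≤ legendreP z ^ 2 := pow_le_pow_left₀ (mul_nonneg (by positivity) (by linarith))
          (pi_div_two_mul_le_legendreP hz) 2

theorem legendreMoment_add_two_le (n : ℕ) :
    legendreMoment (n + 2) ≤ (π / 2) ^ 2 * (1 / ((n + 3 / 2) * (2 * n + 5))) :=
  calc legendreMoment (n + 2)
      ≤ ∫ z in Ioi (0 : ℝ), (π / 2) ^ 2 * legendreQ (n + 2) z :=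
        setIntegral_mono_on (integrableOn_legendreP_sq_mul_legendreQ _)
          ((integrableOn_legendreQ_succ _).const_mul _) measurableSet_Ioi fun z hz ↦
            mul_le_mul_of_nonneg_right (pow_le_pow_left₀ (legendreP_nonneg z)
              (legendreP_le_pi_div_two hz) 2) (legendreQ_nonneg _ hz)
    _ = _ := by
        rw [MeasureTheory.integral_const_mul, integral_legendreQ_succ]
        push_cast
        ring

theorem le_legendreMoment_add_two (n : ℕ) :
    (π / 2) ^ 2 * (1 / ((n + 3 / 2) * (2 * n + 5))
      - 1 / (n + 1 / 2) * (1 / (2 * n + 5) - 1 / (2 * n + 7))) ≤ legendreMoment (n + 2) :=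
  have hQ := integrableOn_legendreQ_succ (n + 1)
  have hzQ := integrableOn_mul_legendreQ_add_two n
  calc _ ≤ (π / 2) ^ 2 * ((∫ z in Ioi (0 : ℝ), legendreQ (n + 2) z)
          - ∫ z in Ioi (0 : ℝ), z * legendreQ (n + 2) z) := by
        rw [integral_legendreQ_succ]
        grw [integral_mul_legendreQ_add_two_le]
        apply le_of_eq
        push_cast
        ring
    _ = ∫ z in Ioi (0 : ℝ), (π / 2) ^ 2 * (legendreQ (n + 2) z - z * legendreQ (n + 2) z) := by
        rw [← MeasureTheory.integral_sub hQ hzQ, ← MeasureTheory.integral_const_mul]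
    _ ≤ _ := setIntegral_mono_on ((hQ.sub hzQ).const_mul _)
        (integrableOn_legendreP_sq_mul_legendreQ _) measurableSet_Ioi fun z hz ↦ by
          calc _ = (π / 2) ^ 2 * (1 - z) * legendreQ (n + 2) z := by ring
            _ ≤ _ := mul_le_mul_of_nonneg_right (legendreP_sq_ge hz) (legendreQ_nonneg _ hz)

theorem tendsto_sq_mul_legendreMoment :
    Tendsto (fun k : ℕ ↦ (k : ℝ) ^ 2 * legendreMoment (2 * k + 2)) atTop (𝓝 (π ^ 2 / 32)) := by
  have hinv : Tendsto (fun k : ℕ ↦ (k : ℝ)⁻¹) atTop (𝓝 0) := tendsto_inv_atTop_nhds_zero_nat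
  have hcont_upper : ContinuousAt (fun x : ℝ ↦
      (π / 2) ^ 2 * (1 / ((2 + 3 / 2 * x) * (4 + 5 * x)))) 0 := by
    fun_prop (disch := norm_num)
  have hcont_lower : ContinuousAt (fun x : ℝ ↦
      (π / 2) ^ 2 * (1 / ((2 + 3 / 2 * x) * (4 + 5 * x))
        - 2 * x / ((2 + 1 / 2 * x) * (4 + 5 * x) * (4 + 7 * x)))) 0 := by
    fun_prop (disch := norm_num)
  have hupper := hcont_upper.tendsto.comp hinv
  have hlower := hcont_lower.tendsto.comp hinv
  rw [show (π / 2) ^ 2 * (1 / ((2 + 3 / 2 * 0) * (4 + 5 * 0))) = π ^ 2 / 32 by ring] at hupper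
  rw [show (π / 2) ^ 2 * (1 / ((2 + 3 / 2 * 0) * (4 + 5 * 0))
    - 2 * 0 / ((2 + 1 / 2 * 0) * (4 + 5 * 0) * (4 + 7 * 0))) = π ^ 2 / 32 by ring] at hlower
  refine tendsto_of_tendsto_of_tendsto_of_le_of_le' hlower hupper ?_ ?_
  · filter_upwards [eventually_gt_atTop 0] with k hk
    have hk₀ : (0 : ℝ) < k := by exact_mod_cast hk
    grw [← le_legendreMoment_add_two (2 * k)]
    apply le_of_eq
    simp only [Function.comp_apply]
    push_cast
    field_simp
    ring
  · filter_upwards [eventually_gt_atTop 0] with k hk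
    have hk₀ : (0 : ℝ) < k := by exact_mod_cast hk
    grw [legendreMoment_add_two_le (2 * k)]
    apply le_of_eq
    simp only [Function.comp_apply]
    push_cast
    field_simp
    ring

theorem legendreMoment_two_mul (k : ℕ) :
    legendreMoment (2 * k) = ((3 / 4 + k) / (1 / 4 + k)) ^ 4 * legendreMoment (2 * (k + 1)) := by
  have hrec := legendreMoment_add_two (2 * k)
  push_cast at hrec
  rw [div_pow, div_mul_eq_mul_div, eq_div_iff (by positivity), mul_add_one]
  linear_combination -hrec / 16

theorem legendreMoment_zero_eq_prod (n : ℕ) : legendreMoment 0 =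
    (∏ k ∈ Finset.range n, ((3 / 4 + k : ℝ) / (1 / 4 + k))) ^ 4 * legendreMoment (2 * n) := by
  induction n with
  | zero => simp
  | succ n ih => rw [ih, Finset.prod_range_succ, mul_pow, legendreMoment_two_mul n, mul_assoc]

theorem gammaSeq_div_gammaSeq_pow_mul {n : ℕ} (hn : 0 < n) :
    (GammaSeq (1 / 4) n / GammaSeq (3 / 4) n) ^ 4 * (n : ℝ) ^ 2 =
      (∏ k ∈ Finset.range (n + 1), ((3 / 4 + k : ℝ) / (1 / 4 + k))) ^ 4 := by
  have hn₀ : (0 : ℝ) < n := by exact_mod_cast hn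
  have hprod {a : ℝ} (ha : 0 < a) : 0 < ∏ k ∈ Finset.range (n + 1), (a + k) :=
    Finset.prod_pos fun k _ ↦ by positivity
  have hquarter := hprod (a := 1 / 4) (by norm_num)
  have hthree_quarter := hprod (a := 3 / 4) (by norm_num)
  have hsq : (n : ℝ) ^ 2 = ((n : ℝ) ^ (1 / 2 : ℝ)) ^ 4 := by
    rw [← rpow_natCast, ← rpow_natCast, ← rpow_mul hn₀.le]
    norm_num
  have hsplit : (n : ℝ) ^ (3 / 4 : ℝ) = (n : ℝ) ^ (1 / 4 : ℝ) * (n : ℝ) ^ (1 / 2 : ℝ) := by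
    rw [← rpow_add hn₀]
    norm_num
  rw [GammaSeq, GammaSeq, Finset.prod_div_distrib, hsplit, hsq]
  field_simp

theorem gamma_three_quarters : Gamma (3 / 4) = π * √2 / Gamma (1 / 4) := by
  have hreflect := Real.Gamma_mul_Gamma_one_sub (1 / 4)
  rw [show (1 - 1 / 4 : ℝ) = 3 / 4 by norm_num, show π * (1 / 4) = π / 4 by ring,
    sin_pi_div_four] at hreflect
  rw [eq_div_iff (Gamma_pos_of_pos (by norm_num)).ne', mul_comm, hreflect]
  field_simp
  norm_num

theorem legendreMoment_zero : legendreMoment 0 = Gamma (1 / 4) ^ 8 / (128 * π ^ 2) := by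
  have hquarter : 0 < Gamma (1 / 4) := Gamma_pos_of_pos (by norm_num)
  have hthree_quarter : 0 < Gamma (3 / 4) := Gamma_pos_of_pos (by norm_num)
  have hlim := (((GammaSeq_tendsto_Gamma (1 / 4)).div (GammaSeq_tendsto_Gamma (3 / 4))
    hthree_quarter.ne').pow 4).mul tendsto_sq_mul_legendreMoment
  have hconst : ∀ᶠ n : ℕ in atTop, (GammaSeq (1 / 4) n / GammaSeq (3 / 4) n) ^ 4 *
      ((n : ℝ) ^ 2 * legendreMoment (2 * n + 2)) = legendreMoment 0 := by
    filter_upwards [eventually_gt_atTop 0] with n hn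
    rw [← mul_assoc, gammaSeq_div_gammaSeq_pow_mul hn, legendreMoment_zero_eq_prod (n + 1),
      mul_add_one]
  rw [tendsto_nhds_unique (tendsto_const_nhds.congr' (hconst.mono fun _ h ↦ h.symm)) hlim,
    gamma_three_quarters]
  have hsqrt : √2 ^ 4 = 4 := by
    rw [show √2 ^ 4 = (√2 ^ 2) ^ 2 by ring, sq_sqrt zero_le_two]
    norm_num
  field_simp
  linear_combination -32 * hsqrt

end Asymptotics

section RealSubstitution

variable {c z : ℝ}

theorem image_arcsin_mul_cos_Ioo (hc : 0 < c) (hc' : c < 1) :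
    (fun α ↦ arcsin (c * cos α)) '' Ioo 0 (π / 2) = Ioo 0 (arcsin c) := by
  refine Subset.antisymm (image_subset_iff.2 fun α hα ↦ ?_) fun θ hθ ↦ ?_
  · have hcos : 0 < cos α := cos_pos_of_mem_Ioo ⟨by linarith [hα.1, pi_pos], hα.2⟩
    have hcos' : cos α < 1 := by
      simpa using cos_lt_cos_of_nonneg_of_le_pi_div_two le_rfl hα.2.le hα.1
    exact ⟨arcsin_pos.2 (by positivity),
      strictMonoOn_arcsin ⟨by nlinarith, by nlinarith⟩ ⟨by linarith, hc'.le⟩ (by nlinarith)⟩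
  · have hθ₂ : θ < π / 2 := hθ.2.trans_le (arcsin_le_pi_div_two c)
    have hsin := sin_pos_of_mem_Ioo ⟨hθ.1, hθ₂⟩
    have hlt : sin θ < c := (lt_arcsin_iff_sin_lt ⟨by linarith [hθ.1], hθ₂.le⟩
      ⟨by linarith, hc'.le⟩).1 hθ.2
    have hdiv : sin θ / c < 1 := (div_lt_one hc).2 hlt
    refine ⟨arccos (sin θ / c), ⟨arccos_pos.2 hdiv, arccos_lt_pi_div_two.2 (by positivity)⟩, ?_⟩
    beta_reduce
    rw [cos_arccos (by linarith [div_pos hsin hc]) hdiv.le, mul_div_cancel₀ _ hc.ne',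
      arcsin_sin (by linarith [hθ.1]) hθ₂.le]

theorem injOn_arcsin_mul_cos (hc : 0 < c) (hc' : c < 1) :
    InjOn (fun α ↦ arcsin (c * cos α)) (Icc 0 π) := by
  refine injOn_arcsin.comp (f := fun α ↦ c * cos α)
    (fun α hα β hβ h ↦ injOn_cos hα hβ (mul_left_cancel₀ hc.ne' h)) fun α _ ↦ ?_
  exact ⟨by nlinarith [neg_one_le_cos α], by nlinarith [cos_le_one α]⟩

theorem hasDerivAt_arcsin_mul_cos (hc : 0 < c) (hc' : c < 1) (α : ℝ) :
    HasDerivAt (fun α ↦ arcsin (c * cos α)) (-(c * sin α / √(1 - (c * cos α) ^ 2))) α := by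
  refine ((hasDerivAt_arcsin (ne_of_gt ?_) (ne_of_lt ?_)).comp α
    ((hasDerivAt_cos α).const_mul c)).congr_deriv (by ring)
  · nlinarith [neg_one_le_cos α]
  · nlinarith [cos_le_one α]

theorem abs_deriv_smul_one_div_sqrt_comp_arcsin (hz : 0 < z) {α : ℝ} (hα : α ∈ Ioo 0 (π / 2)) :
    |-(1 / √(1 + z) * sin α / √(1 - (1 / √(1 + z) * cos α) ^ 2))| •
      (1 / √(1 - (1 + z) * sin (arcsin (1 / √(1 + z) * cos α)) ^ 2)) = legendreQKernel 0 z α := by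
  have hsin := sin_pos_of_mem_Ioo hα
  have hc : 1 / √(1 + z) < 1 :=
    (div_lt_one (by positivity)).2 ((lt_sqrt zero_le_one).2 (by simpa))
  have hc₀ : 0 < 1 / √(1 + z) := by positivity
  have hsq : (1 / √(1 + z) * cos α) ^ 2 = (1 - sin α ^ 2) / (1 + z) := by
    rw [mul_pow, div_pow, sq_sqrt (by positivity), cos_sq']
    ring
  have hsqrt : 1 - (1 - sin α ^ 2) / (1 + z) = (z + sin α ^ 2) / (1 + z) := by
    field_simp
    ring
  rw [sin_arcsin (by nlinarith [neg_one_le_cos α]) (by nlinarith [cos_le_one α]), hsq, hsqrt,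
    mul_div_cancel₀ _ (by positivity), sub_sub_cancel, sqrt_sq hsin.le, abs_neg,
    abs_of_pos (by positivity), sqrt_div (by positivity), legendreQKernel]
  simp only [smul_eq_mul, mul_zero, pow_zero, one_mul]
  field_simp

theorem one_div_sqrt_one_sub_mul_sin_sq_eq_zero (hz : 0 < z) {θ : ℝ}
    (hθ : θ ∈ Ioo 0 (π / 2) \ Ioo 0 (arcsin (1 / √(1 + z)))) :
    1 / √(1 - (1 + z) * sin θ ^ 2) = 0 := by
  have hle : arcsin (1 / √(1 + z)) ≤ θ := not_lt.1 fun h ↦ hθ.2 ⟨hθ.1.1, h⟩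
  have hsin := (arcsin_le_iff_le_sin' ⟨by linarith [hθ.1.1, pi_pos], hθ.1.2⟩).1 hle
  have hsq : (1 / √(1 + z)) ^ 2 ≤ sin θ ^ 2 := pow_le_pow_left₀ (by positivity) hsin 2
  rw [div_pow, sq_sqrt (by positivity), one_pow, div_le_iff₀ (by positivity)] at hsq
  rw [sqrt_eq_zero_of_nonpos (by linarith), div_zero]

theorem integrableOn_and_setIntegral_one_div_sqrt_one_sub_mul_sin_sq (hz : 0 < z) :
    IntegrableOn (fun θ ↦ 1 / √(1 - (1 + z) * sin θ ^ 2)) (Ioo 0 (π / 2)) ∧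
      ∫ θ in Ioo 0 (π / 2), 1 / √(1 - (1 + z) * sin θ ^ 2) = legendreQ 0 z := by
  have hc : 0 < 1 / √(1 + z) := by positivity
  have hc' : 1 / √(1 + z) < 1 :=
    (div_lt_one (by positivity)).2 ((lt_sqrt zero_le_one).2 (by simpa))
  have hderiv : ∀ α ∈ Ioo 0 (π / 2), HasDerivWithinAt _ _ (Ioo 0 (π / 2)) α :=
    fun α _ ↦ (hasDerivAt_arcsin_mul_cos hc hc' α).hasDerivWithinAt
  have hinj := (injOn_arcsin_mul_cos hc hc').mono
    (Ioo_subset_Icc_self.trans (Icc_subset_Icc_right (half_le_self pi_pos.le)))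
  have hsubset : Ioo 0 (arcsin (1 / √(1 + z))) ⊆ Ioo 0 (π / 2) :=
    Ioo_subset_Ioo_right (arcsin_le_pi_div_two _)
  have himage := image_arcsin_mul_cos_Ioo hc hc'
  constructor
  · refine IntegrableOn.of_forall_sdiff_eq_zero (s := Ioo 0 (arcsin (1 / √(1 + z)))) ?_
      measurableSet_Ioo fun θ ↦ one_div_sqrt_one_sub_mul_sin_sq_eq_zero hz
    rw [← himage, integrableOn_image_iff_integrableOn_abs_deriv_smul measurableSet_Ioo hderiv hinj]
    exact ((intervalIntegrable_iff_integrableOn_Ioo_of_le (by positivity)).1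
      ((continuous_legendreQKernel 0 hz).intervalIntegrable _ _)).congr_fun
      (fun α hα ↦ (abs_deriv_smul_one_div_sqrt_comp_arcsin hz hα).symm) measurableSet_Ioo
  · rw [setIntegral_eq_of_subset_of_forall_sdiff_eq_zero measurableSet_Ioo hsubset
        fun θ ↦ one_div_sqrt_one_sub_mul_sin_sq_eq_zero hz, ← himage,
      integral_image_eq_integral_abs_deriv_smul measurableSet_Ioo hderiv hinj, legendreQ,
      intervalIntegral.integral_of_le (by positivity), integral_Ioc_eq_integral_Ioo]
    exact setIntegral_congr_fun measurableSet_Ioo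
      fun α ↦ abs_deriv_smul_one_div_sqrt_comp_arcsin hz

theorem intervalIntegrable_one_div_sqrt_one_sub_mul_sin_sq (hz : 0 < z) :
    IntervalIntegrable (fun θ ↦ 1 / √(1 - (1 + z) * sin θ ^ 2)) volume 0 (π / 2) :=
  (intervalIntegrable_iff_integrableOn_Ioo_of_le (by positivity)).2
    (integrableOn_and_setIntegral_one_div_sqrt_one_sub_mul_sin_sq hz).1

theorem integral_one_div_sqrt_one_sub_mul_sin_sq (hz : 0 < z) :
    ∫ θ in (0 : ℝ)..(π / 2), 1 / √(1 - (1 + z) * sin θ ^ 2) = legendreQ 0 z := by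
  rw [intervalIntegral.integral_of_le (by positivity), integral_Ioc_eq_integral_Ioo,
    (integrableOn_and_setIntegral_one_div_sqrt_one_sub_mul_sin_sq hz).2]

theorem one_div_sqrt_mul_sin_sq_sub_one (hz : 0 < z) (θ : ℝ) :
    1 / √((1 + z) * sin θ ^ 2 - 1) =
      1 / √z * (1 / √(1 - (1 + z⁻¹) * sin (π / 2 - θ) ^ 2)) := by
  rw [sin_pi_div_two_sub, div_mul_div_comm, one_mul, ← sqrt_mul hz.le]
  congr 2
  rw [cos_sq']
  field_simp
  ring

theorem intervalIntegrable_one_div_sqrt_mul_sin_sq_sub_one (hz : 0 < z) :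
    IntervalIntegrable (fun θ ↦ 1 / √((1 + z) * sin θ ^ 2 - 1)) volume 0 (π / 2) := by
  simp only [one_div_sqrt_mul_sin_sq_sub_one hz]
  have h :=
    (intervalIntegrable_one_div_sqrt_one_sub_mul_sin_sq (inv_pos.2 hz)).comp_sub_left (π / 2)
  rw [sub_zero, sub_self] at h
  exact h.symm.const_mul _

theorem integral_one_div_sqrt_mul_sin_sq_sub_one (hz : 0 < z) :
    ∫ θ in (0 : ℝ)..(π / 2), 1 / √((1 + z) * sin θ ^ 2 - 1) = legendreP z := by
  simp only [one_div_sqrt_mul_sin_sq_sub_one hz]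
  rw [intervalIntegral.integral_const_mul, intervalIntegral.integral_comp_sub_left
    (fun θ ↦ 1 / √(1 - (1 + z⁻¹) * sin θ ^ 2)), sub_zero, sub_self,
    integral_one_div_sqrt_one_sub_mul_sin_sq (inv_pos.2 hz), legendreQ, legendreP,
    ← intervalIntegral.integral_const_mul]
  congr! 2 with _
  simp only [legendreQKernel, mul_zero, pow_zero, one_mul]
  rw [div_mul_div_comm, one_mul, ← sqrt_mul hz.le, mul_add, mul_inv_cancel₀ hz.ne']

end RealSubstitution

/-- The integrand of `complexEllipticK`, with the principal branch of the square root. -/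
noncomputable def complexEllipticKernel (m : ℂ) (θ : ℝ) : ℂ :=
  (1 - m * (sin θ ^ 2 : ℝ)) ^ ((-(1 / 2) : ℝ) : ℂ)

/-- The complete elliptic integral of the first kind as a function of the complex parameter
`m = k ^ 2`, with its branch cut along `[1, ∞)`. On the cut the value is the limit from below. -/
noncomputable def complexEllipticK (m : ℂ) : ℂ :=
  ∫ θ in (0 : ℝ)..(π / 2), complexEllipticKernel m θ

section RealAxis

variable {x z : ℝ}

theorem rpow_neg_half (hx : 0 ≤ x) : x ^ (-(1 / 2) : ℝ) = 1 / √x := by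
  rw [rpow_neg hx, sqrt_eq_rpow, one_div, one_div]

theorem norm_complexEllipticKernel (m : ℂ) (θ : ℝ) :
    ‖complexEllipticKernel m θ‖ = 1 / √‖1 - m * (sin θ ^ 2 : ℝ)‖ := by
  rw [complexEllipticKernel, Complex.norm_cpow_real, rpow_neg_half (norm_nonneg _)]

theorem neg_ofReal_cpow_neg_half (hx : 0 < x) :
    (-x : ℂ) ^ ((-(1 / 2) : ℝ) : ℂ) = -Complex.I * (1 / √x : ℝ) := by
  have hexp : Complex.exp (π * Complex.I * (-(1 / 2) : ℝ)) = -Complex.I := by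
    rw [show π * Complex.I * ((-(1 / 2) : ℝ) : ℂ) = -(π / 2 * Complex.I) by push_cast; ring,
      Complex.exp_neg, Complex.exp_pi_div_two_mul_I, Complex.inv_I]
  rw [← Complex.ofReal_neg, Complex.ofReal_cpow_of_nonpos (neg_nonpos.2 hx.le),
    Complex.ofReal_neg, neg_neg, ← Complex.ofReal_cpow hx.le, rpow_neg_half hx.le, hexp, mul_comm]

theorem complexEllipticKernel_ofReal (x θ : ℝ) : complexEllipticKernel x θ =
    (1 / √(1 - x * sin θ ^ 2) : ℝ) - Complex.I * (1 / √(x * sin θ ^ 2 - 1) : ℝ) := by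
  have harg : 1 - (x : ℂ) * (sin θ ^ 2 : ℝ) = (1 - x * sin θ ^ 2 : ℝ) := by push_cast; rfl
  rw [complexEllipticKernel, harg]
  rcases le_or_gt 0 (1 - x * sin θ ^ 2) with h | h
  · rw [← Complex.ofReal_cpow h, rpow_neg_half h, sqrt_eq_zero_of_nonpos (x := _ - 1) (by linarith)]
    simp
  · have hneg : 1 - x * sin θ ^ 2 = -(x * sin θ ^ 2 - 1) := by ring
    rw [sqrt_eq_zero_of_nonpos h.le, hneg, Complex.ofReal_neg,
      neg_ofReal_cpow_neg_half (by linarith)]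
    simp

theorem norm_complexEllipticKernel_ofReal (x θ : ℝ) : ‖complexEllipticKernel x θ‖ =
    1 / √(1 - x * sin θ ^ 2) + 1 / √(x * sin θ ^ 2 - 1) := by
  rw [complexEllipticKernel_ofReal]
  rcases le_total 0 (1 - x * sin θ ^ 2) with h | h
  · rw [sqrt_eq_zero_of_nonpos (x := _ - 1) (by linarith)]
    simp
  · rw [sqrt_eq_zero_of_nonpos h]
    simp

theorem one_sub_mul_sin_sq_pos (hx : x < 1) (θ : ℝ) : 0 < 1 - x * sin θ ^ 2 := by
  rcases le_total x 0 <;> nlinarith [sq_nonneg (sin θ), sin_sq_le_one θ]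

theorem one_div_sqrt_mul_sin_sq_sub_one_eq_zero (hx : x ≤ 1) (θ : ℝ) :
    1 / √(x * sin θ ^ 2 - 1) = 0 := by
  rw [sqrt_eq_zero_of_nonpos (by nlinarith [sq_nonneg (sin θ), sin_sq_le_one θ]), div_zero]

theorem intervalIntegrable_one_div_sqrt (hx : x ≠ 1) :
    IntervalIntegrable (fun θ ↦ 1 / √(1 - x * sin θ ^ 2)) volume 0 (π / 2) ∧
      IntervalIntegrable (fun θ ↦ 1 / √(x * sin θ ^ 2 - 1)) volume 0 (π / 2) := by
  rcases hx.lt_or_gt with h | h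
  · simp only [one_div_sqrt_mul_sin_sq_sub_one_eq_zero h.le]
    exact ⟨(continuous_const.div (by fun_prop) fun θ ↦
      (sqrt_pos.2 (one_sub_mul_sin_sq_pos h θ)).ne').intervalIntegrable _ _,
      intervalIntegrable_const⟩
  · obtain ⟨z, hz, rfl⟩ : ∃ z, 0 < z ∧ 1 + z = x := ⟨x - 1, by linarith, by ring⟩
    exact ⟨intervalIntegrable_one_div_sqrt_one_sub_mul_sin_sq hz,
      intervalIntegrable_one_div_sqrt_mul_sin_sq_sub_one hz⟩

theorem intervalIntegrable_ofReal {f : ℝ → ℝ} {a b : ℝ} (hf : IntervalIntegrable f volume a b) :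
    IntervalIntegrable (fun θ ↦ (f θ : ℂ)) volume a b :=
  ⟨hf.1.ofReal, hf.2.ofReal⟩

theorem intervalIntegrable_complexEllipticKernel (hx : x ≠ 1) :
    IntervalIntegrable (complexEllipticKernel x) volume 0 (π / 2) := by
  obtain ⟨hre, him⟩ := intervalIntegrable_one_div_sqrt hx
  simp only [funext (complexEllipticKernel_ofReal x)]
  exact (intervalIntegrable_ofReal hre).sub ((intervalIntegrable_ofReal him).const_mul _)

theorem legendreP_neg (x : ℝ) :
    legendreP (-x) = ∫ θ in (0 : ℝ)..(π / 2), 1 / √(1 - x * sin θ ^ 2) := by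
  simp only [legendreP, neg_mul, ← sub_eq_add_neg]

theorem complexEllipticK_ofReal (hx : x ≠ 1) : complexEllipticK x =
    legendreP (-x) - Complex.I * ∫ θ in (0 : ℝ)..(π / 2), 1 / √(x * sin θ ^ 2 - 1) := by
  obtain ⟨hre, him⟩ := intervalIntegrable_one_div_sqrt hx
  simp only [complexEllipticK, complexEllipticKernel_ofReal]
  rw [integral_sub (intervalIntegrable_ofReal hre) ((intervalIntegrable_ofReal him).const_mul _),
    intervalIntegral.integral_const_mul, intervalIntegral.integral_ofReal,
    intervalIntegral.integral_ofReal, legendreP_neg]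

theorem complexEllipticK_ofReal_of_lt_one (hx : x < 1) : complexEllipticK x = legendreP (-x) := by
  simp only [complexEllipticK_ofReal hx.ne, one_div_sqrt_mul_sin_sq_sub_one_eq_zero hx.le,
    intervalIntegral.integral_zero, Complex.ofReal_zero, mul_zero, sub_zero]

theorem complexEllipticK_one_add (hz : 0 < z) :
    complexEllipticK (1 + z : ℝ) = legendreQ 0 z - Complex.I * legendreP z := by
  rw [complexEllipticK_ofReal (by linarith), integral_one_div_sqrt_mul_sin_sq_sub_one hz,
    legendreP_neg, integral_one_div_sqrt_one_sub_mul_sin_sq hz]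

theorem integral_norm_complexEllipticKernel (hx : x ≠ 1) :
    ∫ θ in (0 : ℝ)..(π / 2), ‖complexEllipticKernel x θ‖ =
      legendreP (-x) + ∫ θ in (0 : ℝ)..(π / 2), 1 / √(x * sin θ ^ 2 - 1) := by
  obtain ⟨hre, him⟩ := intervalIntegrable_one_div_sqrt hx
  simp only [norm_complexEllipticKernel_ofReal]
  rw [integral_add hre him, legendreP_neg]

theorem legendreP_neg_le_rpow (hx : 0 < x) (hx' : x < 1) :
    legendreP (-x) ≤ (x * (1 - x)) ^ (-(1 / 5) : ℝ) * sinRpowIntegral := by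
  have hreflect : legendreP (-x) = ∫ θ in (0 : ℝ)..(π / 2), 1 / √(1 - x * cos θ ^ 2) := by
    have h := integral_comp_sub_left (a := 0) (b := π / 2)
      (fun θ ↦ 1 / √(1 - x * sin θ ^ 2)) (π / 2)
    simp only [sin_pi_div_two_sub, sub_zero, sub_self] at h
    rw [legendreP_neg, h]
  have hv (θ : ℝ) : 1 - x * cos θ ^ 2 = (1 - x) + x * sin θ ^ 2 := by rw [cos_sq']; ring
  have hx₁ := sub_pos.2 hx'
  simp only [hreflect, hv]
  refine integral_le_mul_sinRpowIntegral ((continuous_const.div (by fun_prop) fun θ ↦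
    (sqrt_pos.2 (by positivity)).ne').intervalIntegrable _ _) fun θ hθ ↦ ?_
  have hs := sin_pos_of_mem_Ioo hθ
  have hsin := sin_sq_le_one θ
  refine one_div_sqrt_le_rpow_mul_rpow (by positivity) hs (by positivity) ?_
  calc (x * (1 - x)) ^ 2 * sin θ ^ 8
      = (1 - x) ^ 2 * (x * sin θ ^ 2) ^ 2 * sin θ ^ 2 * sin θ ^ 2 := by ring
    _ ≤ (1 - x) ^ 2 * (x * sin θ ^ 2) ^ 2 * sin θ ^ 2 * 1 := by gcongr
    _ ≤ (1 - x + x * sin θ ^ 2) ^ 2 * (1 - x + x * sin θ ^ 2) ^ 2 *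
          (1 - x + x * sin θ ^ 2) * 1 := by
        gcongr <;> nlinarith [sq_nonneg (sin θ)]
    _ = (1 - x + x * sin θ ^ 2) ^ 5 := by ring

theorem integral_norm_complexEllipticKernel_le (hx₀ : x ≠ 0) (hx₁ : x ≠ 1) :
    ∫ θ in (0 : ℝ)..(π / 2), ‖complexEllipticKernel x θ‖ ≤
      |x * (1 - x)| ^ (-(1 / 5) : ℝ) * (2 * sinRpowIntegral) := by
  have hC := sinRpowIntegral_nonneg
  have hpos := mul_nonneg (rpow_nonneg (abs_nonneg (x * (1 - x))) (-(1 / 5))) hC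
  rw [integral_norm_complexEllipticKernel hx₁]
  rcases hx₁.lt_or_gt with h | h
  · simp only [one_div_sqrt_mul_sin_sq_sub_one_eq_zero h.le, intervalIntegral.integral_zero]
    suffices legendreP (-x) ≤ |x * (1 - x)| ^ (-(1 / 5) : ℝ) * sinRpowIntegral by linarith
    rcases hx₀.lt_or_gt with h₀ | h₀
    · rw [abs_of_neg (by nlinarith), ← neg_mul, sub_eq_add_neg]
      exact legendreP_le_rpow (neg_pos.2 h₀)
    · rw [abs_of_pos (by nlinarith)]
      exact legendreP_neg_le_rpow h₀ h
  · obtain ⟨z, hz, rfl⟩ : ∃ z, 0 < z ∧ 1 + z = x := ⟨x - 1, by linarith, by ring⟩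
    have habs : |(1 + z) * (1 - (1 + z))| = z * (1 + z) := by
      rw [abs_of_neg (by nlinarith)]
      ring
    rw [integral_one_div_sqrt_mul_sin_sq_sub_one hz, legendreP_neg,
      integral_one_div_sqrt_one_sub_mul_sin_sq hz, habs]
    linarith [legendreP_le_rpow hz, legendreQ_le_rpow 0 hz]

end RealAxis

section OffRealAxis

variable {m : ℂ} {x : ℝ}

theorem one_sub_mul_sin_sq_mem_slitPlane (hm : m.im ≠ 0) (θ : ℝ) :
    1 - m * (sin θ ^ 2 : ℝ) ∈ Complex.slitPlane := by
  rw [Complex.mem_slitPlane_iff]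
  by_cases h : sin θ = 0
  · simp [h]
  · right
    rw [Complex.sub_im, Complex.im_mul_ofReal, Complex.one_im, zero_sub, neg_ne_zero]
    positivity

theorem continuous_complexEllipticKernel (hm : m.im ≠ 0) :
    Continuous (complexEllipticKernel m) := by
  refine continuous_iff_continuousAt.2 fun θ ↦ ?_
  unfold complexEllipticKernel
  exact ContinuousAt.cpow (by fun_prop) continuousAt_const (one_sub_mul_sin_sq_mem_slitPlane hm θ)

theorem differentiableAt_complexEllipticK (hm : m.im ≠ 0) :
    DifferentiableAt ℂ complexEllipticK m := by
  refine (hasDerivAt_intervalIntegral_of_continuousOn (s := {m : ℂ | m.im ≠ 0})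
    (F := complexEllipticKernel) (F' := fun m θ ↦ ((-(1 / 2) : ℝ) : ℂ) *
      (1 - m * (sin θ ^ 2 : ℝ)) ^ (((-(1 / 2) : ℝ) : ℂ) - 1) * (-(1 * (sin θ ^ 2 : ℝ))))
    (isOpen_ne.preimage Complex.continuous_im) hm
    (fun x hx ↦ (continuous_complexEllipticKernel hx).continuousOn) ?_
    fun x hx θ _ ↦ (((hasDerivAt_id x).mul_const _).const_sub 1).cpow_const
      (one_sub_mul_sin_sq_mem_slitPlane hx θ)).differentiableAt
  rintro ⟨x, θ⟩ ⟨hx, -⟩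
  refine ContinuousAt.continuousWithinAt (.mul (.mul continuousAt_const ?_) (by fun_prop))
  exact ContinuousAt.cpow (by fun_prop) continuousAt_const (one_sub_mul_sin_sq_mem_slitPlane hx θ)

theorem complexEllipticK_conj (hm : m.im ≠ 0) :
    complexEllipticK (starRingEnd ℂ m) = starRingEnd ℂ (complexEllipticK m) := by
  have hkernel (θ : ℝ) : complexEllipticKernel (starRingEnd ℂ m) θ =
      starRingEnd ℂ (complexEllipticKernel m θ) := by
    have h := Complex.conj_cpow (1 - m * (sin θ ^ 2 : ℝ)) ((-(1 / 2) : ℝ) : ℂ)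
      (Complex.slitPlane_arg_ne_pi (one_sub_mul_sin_sq_mem_slitPlane hm θ))
    rw [Complex.conj_ofReal] at h
    simp only [complexEllipticKernel, ← h, map_sub, map_mul, Complex.conj_ofReal, map_one]
  simp only [complexEllipticK, hkernel]
  exact (Complex.conjCLE : ℂ →L[ℝ] ℂ).intervalIntegral_comp_comm
    ((continuous_complexEllipticKernel hm).intervalIntegrable _ _)

theorem ae_one_sub_mul_sin_sq_ne_zero (x : ℝ) :
    ∀ᵐ θ : ℝ, θ ∈ uIoc 0 (π / 2) → 1 - x * sin θ ^ 2 ≠ 0 := by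
  rw [uIoc_of_le (by positivity), ae_iff]
  refine Set.Subsingleton.measure_zero (fun θ hθ φ hφ ↦ ?_) _
  simp only [mem_ofPred_eq, Classical.not_imp, not_not] at hθ hφ
  have hsin {θ : ℝ} (hθ : θ ∈ Ioc 0 (π / 2)) : 0 ≤ sin θ :=
    sin_nonneg_of_nonneg_of_le_pi hθ.1.le (hθ.2.trans (half_le_self pi_pos.le))
  have hx : x ≠ 0 := by
    rintro rfl
    simp at hθ
  have hsq : sin θ ^ 2 = sin φ ^ 2 := mul_left_cancel₀ hx (by linarith)
  refine injOn_sin ⟨by linarith [hθ.1.1, pi_pos], hθ.1.2⟩ ⟨by linarith [hφ.1.1, pi_pos], hφ.1.2⟩ ?_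
  exact (pow_left_inj₀ (hsin hθ.1) (hsin hφ.1) two_ne_zero).1 hsq

theorem norm_complexEllipticKernel_le_re (m : ℂ) {θ : ℝ} (hθ : 1 - m.re * sin θ ^ 2 ≠ 0) :
    ‖complexEllipticKernel m θ‖ ≤ ‖complexEllipticKernel m.re θ‖ := by
  have hre (m : ℂ) : (1 - m * (sin θ ^ 2 : ℝ)).re = 1 - m.re * sin θ ^ 2 := by
    rw [Complex.sub_re, Complex.re_mul_ofReal, Complex.one_re]
  have harg : 1 - (m.re : ℂ) * (sin θ ^ 2 : ℝ) = (1 - m.re * sin θ ^ 2 : ℝ) := by push_cast; rfl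
  have hle := Complex.abs_re_le_norm (1 - m * (sin θ ^ 2 : ℝ))
  have hpos := abs_pos.2 hθ
  rw [hre] at hle
  rw [norm_complexEllipticKernel, norm_complexEllipticKernel, harg, Complex.norm_real,
    Real.norm_eq_abs]
  gcongr

theorem ae_norm_complexEllipticKernel_le_re (m : ℂ) : ∀ᵐ θ : ℝ, θ ∈ uIoc 0 (π / 2) →
    ‖complexEllipticKernel m θ‖ ≤ ‖complexEllipticKernel m.re θ‖ := by
  filter_upwards [ae_one_sub_mul_sin_sq_ne_zero m.re] with θ hne hθ
    using norm_complexEllipticKernel_le_re m (hne hθ)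

theorem norm_complexEllipticK_le_rpow (h₀ : m.re ≠ 0) (h₁ : m.re ≠ 1) :
    ‖complexEllipticK m‖ ≤ |m.re * (1 - m.re)| ^ (-(1 / 5) : ℝ) * (2 * sinRpowIntegral) := by
  refine (intervalIntegral.norm_integral_le_of_norm_le (by positivity) ?_
    (intervalIntegrable_complexEllipticKernel h₁).norm).trans
    (integral_norm_complexEllipticKernel_le h₀ h₁)
  simpa only [uIoc_of_le (show (0 : ℝ) ≤ π / 2 by positivity)] using
    ae_norm_complexEllipticKernel_le_re m

theorem continuousWithinAt_cpow_const_im_nonneg (c : ℂ) (hx : x ≠ 0) :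
    ContinuousWithinAt (fun w : ℂ ↦ w ^ c) {w | 0 ≤ w.im} x := by
  rcases hx.lt_or_gt with h | h
  · have hne : (x : ℂ) ≠ 0 := Complex.ofReal_ne_zero.2 hx
    have hlog :=
      Complex.continuousWithinAt_log_of_re_neg_of_im_zero (z := x) h (Complex.ofReal_im x)
    refine (hlog.mul_const c).cexp.congr_of_eventuallyEq ?_ (Complex.cpow_def_of_ne_zero hne c)
    filter_upwards [mem_nhdsWithin_of_mem_nhds (isOpen_ne.mem_nhds hne)] with w hw
      using Complex.cpow_def_of_ne_zero hw c
  · exact (continuousAt_cpow_const (Complex.ofReal_mem_slitPlane.2 h)).continuousWithinAt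

theorem tendsto_complexEllipticKernel {θ : ℝ} (hθ : 1 - x * sin θ ^ 2 ≠ 0) :
    Tendsto (fun ε : ℝ ↦ complexEllipticKernel ⟨x, -ε⟩ θ) (𝓝[>] 0)
      (𝓝 (complexEllipticKernel x θ)) := by
  have harg : 1 - (x : ℂ) * (sin θ ^ 2 : ℝ) = (1 - x * sin θ ^ 2 : ℝ) := by push_cast; rfl
  have hmk (ε : ℝ) : (⟨x, -ε⟩ : ℂ) = x - ε * Complex.I := by apply Complex.ext <;> simp
  have hcont : Continuous fun ε : ℝ ↦ 1 - (⟨x, -ε⟩ : ℂ) * (sin θ ^ 2 : ℝ) := by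
    simp only [hmk]
    fun_prop
  have hpath : Tendsto (fun ε : ℝ ↦ 1 - (⟨x, -ε⟩ : ℂ) * (sin θ ^ 2 : ℝ)) (𝓝[>] 0)
      (𝓝[{w | 0 ≤ w.im}] (1 - x * sin θ ^ 2 : ℝ)) := by
    refine tendsto_nhdsWithin_iff.2 ⟨?_, ?_⟩
    · convert (hcont.tendsto 0).mono_left nhdsWithin_le_nhds using 2
      rw [← harg, hmk, Complex.ofReal_zero, zero_mul, sub_zero]
    · filter_upwards [self_mem_nhdsWithin] with ε hε
      rw [Complex.sub_im, Complex.im_mul_ofReal, Complex.one_im, zero_sub, neg_mul, neg_neg]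
      exact mul_nonneg (le_of_lt hε) (sq_nonneg (sin θ))
  have hlim := (continuousWithinAt_cpow_const_im_nonneg ((-(1 / 2) : ℝ) : ℂ) hθ).tendsto.comp hpath
  rw [← harg] at hlim
  exact hlim

theorem tendsto_complexEllipticK (hx : x ≠ 1) :
    Tendsto (fun ε : ℝ ↦ complexEllipticK ⟨x, -ε⟩) (𝓝[>] 0) (𝓝 (complexEllipticK x)) := by
  refine intervalIntegral.tendsto_integral_filter_of_dominated_convergence
    (fun θ ↦ ‖complexEllipticKernel x θ‖) ?_
    (.of_forall fun ε ↦ ae_norm_complexEllipticKernel_le_re ⟨x, -ε⟩)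
    (intervalIntegrable_complexEllipticKernel hx).norm ?_
  · filter_upwards [self_mem_nhdsWithin] with ε hε
    exact (continuous_complexEllipticKernel (neg_ne_zero.2 (ne_of_gt hε))).aestronglyMeasurable
  · filter_upwards [ae_one_sub_mul_sin_sq_ne_zero x] with θ hne hθ
    exact tendsto_complexEllipticKernel (hne hθ)

theorem tendsto_complexEllipticK_one_sub (hx : x ≠ 0) :
    Tendsto (fun ε : ℝ ↦ complexEllipticK (1 - ⟨x, -ε⟩)) (𝓝[>] 0)
      (𝓝 (starRingEnd ℂ (complexEllipticK (1 - x : ℝ)))) := by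
  refine ((Complex.continuous_conj.tendsto _).comp
    (tendsto_complexEllipticK (x := 1 - x) (by simpa using hx))).congr' ?_
  filter_upwards [self_mem_nhdsWithin] with ε hε
  rw [Function.comp, ← complexEllipticK_conj (neg_ne_zero.2 (ne_of_gt hε))]
  congr 1
  apply Complex.ext <;> simp

end OffRealAxis

section Decay

theorem norm_complexEllipticK_le_of_abs_re_le_abs_im {m : ℂ} (hre : |m.re| ≤ |m.im|)
    (him : m.im ≠ 0) :
    ‖complexEllipticK m‖ ≤ (m.im ^ 2 / 2) ^ (-(1 / 5) : ℝ) * sinRpowIntegral := by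
  refine (intervalIntegral.norm_integral_le_integral_norm (by positivity)).trans
    (integral_le_mul_sinRpowIntegral
      ((continuous_complexEllipticKernel him).intervalIntegrable _ _).norm fun θ hθ ↦ ?_)
  have hs := sin_pos_of_mem_Ioo hθ
  set v := ‖1 - m * (sin θ ^ 2 : ℝ)‖
  have him_le : |m.im| * sin θ ^ 2 ≤ v := by
    have h := Complex.abs_im_le_norm (1 - m * (sin θ ^ 2 : ℝ))
    rwa [Complex.sub_im, Complex.im_mul_ofReal, Complex.one_im, zero_sub, abs_neg, abs_mul,
      abs_of_nonneg (sq_nonneg (sin θ))] at h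
  have hhalf : 1 / 2 ≤ v := by
    have h := (le_abs_self _).trans (Complex.abs_re_le_norm (1 - m * (sin θ ^ 2 : ℝ)))
    rw [Complex.sub_re, Complex.re_mul_ofReal, Complex.one_re] at h
    have hle : m.re * sin θ ^ 2 ≤ |m.im| * sin θ ^ 2 := by gcongr; exact (le_abs_self _).trans hre
    linarith
  rw [norm_complexEllipticKernel]
  refine one_div_sqrt_le_rpow_mul_rpow (by positivity) hs (by linarith) ?_
  calc (m.im ^ 2 / 2) ^ 2 * sin θ ^ 8 = (|m.im| * sin θ ^ 2) ^ 4 * (1 / 4) := by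
        rw [← sq_abs m.im]; ring
    _ ≤ v ^ 4 * v := by gcongr; linarith
    _ = v ^ 5 := by ring

theorem norm_complexEllipticK_le_norm_rpow {m : ℂ} (hm : 4 ≤ ‖m‖) :
    ‖complexEllipticK m‖ ≤ (‖m‖ / 2) ^ (-(2 / 5) : ℝ) * (2 * sinRpowIntegral) := by
  have hnorm : ‖m‖ ^ 2 = m.re ^ 2 + m.im ^ 2 := by
    rw [Complex.sq_norm, Complex.normSq_apply]; ring
  have hrpow : (‖m‖ / 2) ^ (-(2 / 5) : ℝ) = ((‖m‖ / 2) ^ 2) ^ (-(1 / 5) : ℝ) := by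
    rw [← rpow_natCast, ← rpow_mul (by positivity)]
    norm_num
  have hS := sinRpowIntegral_nonneg
  rw [hrpow]
  rcases le_total |m.re| |m.im| with h | h
  · have hsq := sq_le_sq.2 h
    refine (norm_complexEllipticK_le_of_abs_re_le_abs_im h fun h0 ↦ by nlinarith).trans ?_
    gcongr ?_ * ?_
    · exact rpow_le_rpow_of_nonpos (by positivity) (by linarith) (by norm_num)
    · linarith
  · have hsq := sq_le_sq.2 h
    have hre : 2 ≤ |m.re| := abs_le_of_sq_le_sq' (by rw [sq_abs]; nlinarith) (abs_nonneg _) |>.2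
    have hle : (‖m‖ / 2) ^ 2 ≤ |m.re * (1 - m.re)| := by
      have hsub := abs_sub_abs_le_abs_sub m.re 1
      rw [abs_one, abs_sub_comm] at hsub
      rw [abs_mul]
      nlinarith [sq_abs m.re]
    refine (norm_complexEllipticK_le_rpow ?_ ?_).trans ?_
    · rintro h0
      norm_num [h0] at hre
    · rintro h1
      norm_num [h1] at hre
    · gcongr ?_ * _
      exact rpow_le_rpow_of_nonpos (by positivity) hle (by norm_num)

theorem integrableOn_mul_one_sub_rpow_neg {a : ℝ} (ha : a < 1) :
    IntegrableOn (fun x : ℝ ↦ (x * (1 - x)) ^ (-a)) (Ioo 0 1) := by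
  have hre : 0 < ((1 - a : ℝ) : ℂ).re := sub_pos.2 ha
  have hbeta := (intervalIntegrable_iff_integrableOn_Ioo_of_le zero_le_one).1
    (Complex.betaIntegral_convergent hre hre).norm
  refine hbeta.congr_fun (fun x hx ↦ ?_) measurableSet_Ioo
  have hx' : 0 < 1 - x := sub_pos.2 hx.2
  have hcast : 1 - (x : ℂ) = (1 - x : ℝ) := by push_cast; rfl
  dsimp only
  rw [norm_mul, hcast, Complex.norm_cpow_eq_rpow_re_of_pos hx.1,
    Complex.norm_cpow_eq_rpow_re_of_pos hx', ← mul_rpow hx.1.le hx'.le]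
  simp

theorem integrable_abs_mul_one_sub_rpow_neg {a : ℝ} (ha : 1 / 2 < a) (ha' : a < 1) :
    Integrable fun x : ℝ ↦ |x * (1 - x)| ^ (-a) := by
  have houter := integrableOn_mul_one_add_rpow_neg ha ha'
  have hleft : IntegrableOn (fun x : ℝ ↦ |x * (1 - x)| ^ (-a)) (Iic 0) := by
    rw [integrableOn_Iic_iff_integrableOn_Iio]
    refine (IntegrableOn.comp_neg_Iio (c := 0) (by rwa [neg_zero])).congr_fun ?_ measurableSet_Iio
    intro x hx
    have hx : x < 0 := hx
    dsimp only
    rw [abs_mul, abs_of_neg hx, abs_of_pos (by linarith), sub_eq_add_neg]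
  have hmiddle : IntegrableOn (fun x : ℝ ↦ |x * (1 - x)| ^ (-a)) (Ioc 0 1) := by
    rw [integrableOn_Ioc_iff_integrableOn_Ioo]
    exact (integrableOn_mul_one_sub_rpow_neg ha').congr_fun (fun x hx ↦ by
      rw [abs_of_pos (mul_pos hx.1 (sub_pos.2 hx.2))]) measurableSet_Ioo
  have hright : IntegrableOn (fun x : ℝ ↦ |x * (1 - x)| ^ (-a)) (Ioi 1) := by
    have hshift := ((measurePreserving_sub_right volume (1 : ℝ)).integrableOn_comp_preimage
      (MeasurableEquiv.subRight (1 : ℝ)).measurableEmbedding).2 houter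
    rw [preimage_sub_const_Ioi, zero_add] at hshift
    refine hshift.congr_fun (fun x hx ↦ ?_) measurableSet_Ioi
    have hx : 1 < x := hx
    dsimp only [Function.comp]
    rw [abs_mul, abs_of_pos (by linarith), abs_of_neg (by linarith)]
    ring_nf
  rw [← integrableOn_univ, ← Iic_union_Ioi (a := (0 : ℝ)), ← Ioc_union_Ioi_eq_Ioi (zero_le_one' ℝ)]
  exact hleft.union (hmiddle.union hright)

end Decay

section LowerHalfPlane

open Bornology

variable {f : ℂ → ℂ}

theorem continuous_horizontal (hf : DifferentiableOn ℂ f {m | m.im < 0}) {y : ℝ} (hy : y < 0) :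
    Continuous fun x : ℝ ↦ f ⟨x, y⟩ := by
  simp only [Complex.mk_eq_add_mul_I]
  refine continuous_iff_continuousAt.2 fun x ↦ ContinuousAt.comp (g := f) ?_ (by fun_prop)
  exact (hf.differentiableAt ((isOpen_lt Complex.continuous_im continuous_const).mem_nhds
    (by simpa using hy))).continuousAt

theorem norm_intervalIntegral_horizontal_le (hf : DifferentiableOn ℂ f {m | m.im < 0})
    {y M R : ℝ} (hy : y < 0) (hyR : -R < y) (hM : ∀ m : ℂ, m.im < 0 → R ≤ ‖m‖ → ‖f m‖ ≤ M) :
    ‖∫ x in (-R)..R, f ⟨x, y⟩‖ ≤ 6 * (M * R) := by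
  have hR : 0 < R := by linarith
  have hM0 : 0 ≤ M := (norm_nonneg _).trans (hM ⟨0, -R⟩ (neg_neg_of_pos hR) <| by
    simpa [abs_of_pos hR] using Complex.abs_im_le_norm ⟨0, -R⟩)
  have hrect := Complex.integral_boundary_rect_eq_zero_of_differentiableOn f ⟨-R, -R⟩ ⟨R, y⟩
    (hf.mono fun m hm ↦ (uIcc_of_le hyR.le ▸ hm.2 : m.im ∈ Icc (-R) y).2.trans_lt hy)
  simp only [← Complex.mk_eq_add_mul_I] at hrect
  have hbottom : ‖∫ x in (-R)..R, f ⟨x, -R⟩‖ ≤ M * |R - -R| :=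
    intervalIntegral.norm_integral_le_of_norm_le_const fun x _ ↦ hM _ (neg_neg_of_pos hR) <| by
      simpa [abs_of_pos hR] using Complex.abs_im_le_norm ⟨x, -R⟩
  have hside {c : ℝ} (hc : |c| = R) : ‖∫ t in (-R)..y, f ⟨c, t⟩‖ ≤ M * |y - -R| := by
    refine intervalIntegral.norm_integral_le_of_norm_le_const fun t ht ↦ hM _ ?_ ?_
    · rw [uIoc_of_le hyR.le] at ht
      exact ht.2.trans_lt hy
    · exact hc.symm.trans_le (Complex.abs_re_le_norm ⟨c, t⟩)
  have hright := hside (abs_of_pos hR)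
  have hleft := hside ((abs_neg R).trans (abs_of_pos hR))
  rw [abs_of_pos (by linarith)] at hbottom hright hleft
  have htop : ∫ x in (-R)..R, f ⟨x, y⟩ = (∫ x in (-R)..R, f ⟨x, -R⟩) +
      Complex.I • (∫ t in (-R)..y, f ⟨R, t⟩) - Complex.I • ∫ t in (-R)..y, f ⟨-R, t⟩ := by
    linear_combination -hrect
  rw [htop]
  refine (norm_sub_le _ _).trans ?_
  grw [norm_add_le]
  simp only [norm_smul, Complex.norm_I, one_mul]
  nlinarith

theorem integral_horizontal_eq_zero (hf : DifferentiableOn ℂ f {m | m.im < 0})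
    (hlim : Tendsto (fun m ↦ m * f m) (cobounded ℂ ⊓ 𝓟 {m | m.im < 0}) (𝓝 0)) {y : ℝ} (hy : y < 0)
    (hint : Integrable fun x : ℝ ↦ f ⟨x, y⟩) :
    ∫ x : ℝ, f ⟨x, y⟩ = 0 := by
  refine tendsto_nhds_unique
    (intervalIntegral_tendsto_integral hint tendsto_neg_atTop_atBot tendsto_id) ?_
  refine Metric.tendsto_nhds.2 fun ε hε ↦ ?_
  have hsmall := hlim.norm.eventually_lt_const (u := ε / 12) (by simpa using hε)
  rw [eventually_inf_principal, hasBasis_cobounded_norm.eventually_iff] at hsmall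
  obtain ⟨r, -, hr⟩ := hsmall
  filter_upwards [eventually_ge_atTop r, eventually_gt_atTop (-y)] with R hrR hyR
  have hR : 0 < R := by linarith
  rw [dist_zero_right]
  calc ‖∫ x in (-R)..R, f ⟨x, y⟩‖ ≤ 6 * (ε / 12 / R * R) := by
        refine norm_intervalIntegral_horizontal_le hf hy (by linarith) fun m hm hRm ↦ ?_
        have hlt : ‖m * f m‖ < ε / 12 := hr (hrR.trans hRm) hm
        rw [norm_mul] at hlt
        rw [le_div_iff₀ hR]
        nlinarith [norm_nonneg (f m)]
    _ = ε / 2 := by field_simp; norm_num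
    _ < ε := half_lt_self hε

theorem integrable_and_integral_boundary_eq_zero (hf : DifferentiableOn ℂ f {m | m.im < 0})
    (hlim : Tendsto (fun m ↦ m * f m) (cobounded ℂ ⊓ 𝓟 {m | m.im < 0}) (𝓝 0))
    {bound : ℝ → ℝ} (hbound : Integrable bound)
    (hle : ∀ y < 0, ∀ᵐ x : ℝ, ‖f ⟨x, y⟩‖ ≤ bound x) {g : ℝ → ℂ}
    (hg : ∀ᵐ x : ℝ, Tendsto (fun ε : ℝ ↦ f ⟨x, -ε⟩) (𝓝[>] 0) (𝓝 (g x))) :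
    Integrable g ∧ ∫ x, g x = 0 := by
  obtain ⟨ε, -, hpos, hε⟩ := exists_seq_strictAnti_tendsto (0 : ℝ)
  have hε' : Tendsto ε atTop (𝓝[>] 0) := tendsto_nhdsWithin_iff.2 ⟨hε, .of_forall hpos⟩
  have hmeas (n : ℕ) : AEStronglyMeasurable fun x : ℝ ↦ f ⟨x, -ε n⟩ :=
    (continuous_horizontal hf (neg_neg_of_pos (hpos n))).aestronglyMeasurable
  have hdom (n : ℕ) := hle (-ε n) (neg_neg_of_pos (hpos n))
  have hlim' : ∀ᵐ x : ℝ, Tendsto (fun n ↦ f ⟨x, -ε n⟩) atTop (𝓝 (g x)) :=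
    hg.mono fun x hx ↦ hx.comp hε'
  have hzero (n : ℕ) : ∫ x : ℝ, f ⟨x, -ε n⟩ = 0 :=
    integral_horizontal_eq_zero hf hlim (neg_neg_of_pos (hpos n)) (hbound.mono' (hmeas n) (hdom n))
  refine ⟨hbound.mono' (aestronglyMeasurable_of_tendsto_ae atTop hmeas hlim') ?_, ?_⟩
  · filter_upwards [hlim', ae_all_iff.2 hdom] with x hx hd
    exact le_of_tendsto' hx.norm hd
  · have h := tendsto_integral_of_dominated_convergence bound hmeas hbound hdom hlim'
    simp only [hzero] at h
    exact tendsto_nhds_unique h tendsto_const_nhds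

end LowerHalfPlane

section Cubic

open Bornology

/-- The cubic expression in `K(m)` and `K(1 - m)` that is integrated along the real axis. Its
coefficients are chosen so that, in the real part of its boundary value from below, the
contributions of `legendreP ^ 3` from `x < 0` and from `1 < x` cancel. -/
noncomputable def ellipticCubic (m : ℂ) : ℂ :=
  complexEllipticK m ^ 2 *
    ((3 - 2 * Complex.I) * complexEllipticK (1 - m) - Complex.I * complexEllipticK m)

theorem norm_ellipticCubic_le {m : ℂ} {b : ℝ} (hm : ‖complexEllipticK m‖ ≤ b)
    (hm' : ‖complexEllipticK (1 - m)‖ ≤ b) : ‖ellipticCubic m‖ ≤ 6 * b ^ 3 := by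
  have hb : 0 ≤ b := (norm_nonneg _).trans hm
  have hcoeff : ‖(3 - 2 * Complex.I : ℂ)‖ ≤ 5 := by
    refine (norm_sub_le _ _).trans ?_
    rw [norm_mul, Complex.norm_I]
    norm_num
  calc ‖ellipticCubic m‖ ≤ ‖complexEllipticK m‖ ^ 2 *
        (‖(3 - 2 * Complex.I : ℂ)‖ * ‖complexEllipticK (1 - m)‖ + ‖complexEllipticK m‖) := by
        rw [ellipticCubic, norm_mul, norm_pow]
        grw [norm_sub_le]
        rw [norm_mul, norm_mul, Complex.norm_I, one_mul]
    _ ≤ b ^ 2 * (5 * b + b) := by gcongr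
    _ = 6 * b ^ 3 := by ring

theorem differentiableOn_ellipticCubic : DifferentiableOn ℂ ellipticCubic {m | m.im < 0} := by
  intro m (hm : m.im < 0)
  have hK := differentiableAt_complexEllipticK hm.ne
  have hK' : DifferentiableAt ℂ (fun m ↦ complexEllipticK (1 - m)) m :=
    DifferentiableAt.comp m (differentiableAt_complexEllipticK (by simpa using hm.ne))
      (by fun_prop)
  exact ((hK.pow 2).mul ((hK'.const_mul _).sub (hK.const_mul _))).differentiableWithinAt

theorem norm_ellipticCubic_le_rpow {x : ℝ} (hx : x ≠ 0) (hx' : x ≠ 1) (y : ℝ) :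
    ‖ellipticCubic ⟨x, y⟩‖ ≤ 6 * (2 * sinRpowIntegral) ^ 3 * |x * (1 - x)| ^ (-(3 / 5) : ℝ) := by
  have hreflect : |(1 - ⟨x, y⟩ : ℂ).re * (1 - (1 - ⟨x, y⟩ : ℂ).re)| = |x * (1 - x)| := by
    rw [Complex.sub_re, Complex.one_re, sub_sub_cancel, mul_comm]
  have hK := norm_complexEllipticK_le_rpow (m := ⟨x, y⟩) hx hx'
  have hK' := norm_complexEllipticK_le_rpow (m := 1 - ⟨x, y⟩)
    (by simpa [sub_eq_zero] using hx'.symm) (by simpa using hx)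
  rw [hreflect] at hK'
  refine (norm_ellipticCubic_le hK hK').trans_eq ?_
  rw [mul_pow, ← rpow_natCast, ← rpow_mul (abs_nonneg _)]
  norm_num
  ring

theorem norm_ellipticCubic_le_norm_rpow {m : ℂ} (hm : 8 ≤ ‖m‖) :
    ‖ellipticCubic m‖ ≤ 6 * (2 * sinRpowIntegral) ^ 3 * (‖m‖ / 4) ^ (-(6 / 5) : ℝ) := by
  have hle {w : ℂ} (hw : ‖m‖ / 2 ≤ ‖w‖) :
      ‖complexEllipticK w‖ ≤ (‖m‖ / 4) ^ (-(2 / 5) : ℝ) * (2 * sinRpowIntegral) := by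
    have hS := sinRpowIntegral_nonneg
    refine (norm_complexEllipticK_le_norm_rpow (by linarith)).trans ?_
    gcongr ?_ * _
    exact rpow_le_rpow_of_nonpos (by positivity) (by linarith) (by norm_num)
  have hsub : ‖m‖ / 2 ≤ ‖1 - m‖ := by
    have h := norm_sub_norm_le m 1
    rw [norm_one, norm_sub_rev] at h
    linarith
  refine (norm_ellipticCubic_le (hle (by linarith)) (hle hsub)).trans_eq ?_
  rw [mul_pow, ← rpow_natCast, ← rpow_mul (by positivity)]
  norm_num
  ring

theorem tendsto_mul_ellipticCubic_cobounded :
    Tendsto (fun m ↦ m * ellipticCubic m) (cobounded ℂ) (𝓝 0) := by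
  have hlim : Tendsto (fun r : ℝ ↦ 24 * (2 * sinRpowIntegral) ^ 3 * (r / 4) ^ (-(1 / 5) : ℝ)) atTop
      (𝓝 0) := by
    simpa only [mul_zero, Function.comp, id] using ((tendsto_rpow_neg_atTop (by norm_num)).comp
      (tendsto_id.atTop_div_const (by norm_num))).const_mul (24 * (2 * sinRpowIntegral) ^ 3)
  refine squeeze_zero_norm' ?_ (hlim.comp tendsto_norm_cobounded_atTop)
  filter_upwards [eventually_cobounded_le_norm 8] with m hm
  rw [norm_mul, Function.comp]
  grw [norm_ellipticCubic_le_norm_rpow hm]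
  have hrpow : (‖m‖ / 4) ^ (-(1 / 5) : ℝ) = ‖m‖ / 4 * (‖m‖ / 4) ^ (-(6 / 5) : ℝ) := by
    rw [← rpow_one_add' (by positivity) (by norm_num)]
    norm_num
  rw [hrpow]
  exact le_of_eq (by ring)

/-- The limit of `ellipticCubic` at the real point `x` from the lower half plane: there `K(m)`
takes its own value at `x`, while `1 - m` approaches `1 - x` from above, giving a conjugate. -/
noncomputable def ellipticCubicBoundary (x : ℝ) : ℂ :=
  complexEllipticK x ^ 2 *
    ((3 - 2 * Complex.I) * starRingEnd ℂ (complexEllipticK (1 - x : ℝ)) -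
      Complex.I * complexEllipticK x)

theorem integrable_and_integral_ellipticCubicBoundary :
    Integrable ellipticCubicBoundary ∧ ∫ x, ellipticCubicBoundary x = 0 := by
  have hne : ∀ᵐ x : ℝ, x ≠ 0 ∧ x ≠ 1 := (Measure.ae_ne volume 0).and (Measure.ae_ne volume 1)
  refine integrable_and_integral_boundary_eq_zero differentiableOn_ellipticCubic
    (tendsto_mul_ellipticCubic_cobounded.mono_left inf_le_left)
    ((integrable_abs_mul_one_sub_rpow_neg (a := 3 / 5) (by norm_num) (by norm_num)).const_mul
      (6 * (2 * sinRpowIntegral) ^ 3)) (fun y _ ↦ ?_) ?_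
  · filter_upwards [hne] with x hx using norm_ellipticCubic_le_rpow hx.1 hx.2 y
  · filter_upwards [hne] with x ⟨hx, hx'⟩
    have hK := tendsto_complexEllipticK hx'
    exact (hK.pow 2).mul (((tendsto_complexEllipticK_one_sub hx).const_mul _).sub (hK.const_mul _))

theorem re_ellipticCubicBoundary_of_mem_Ioo {x : ℝ} (hx : x ∈ Ioo 0 1) :
    (ellipticCubicBoundary x).re = 3 * (legendreP (-x) ^ 2 * legendreP (-(1 - x))) := by
  rw [ellipticCubicBoundary, complexEllipticK_ofReal_of_lt_one hx.2,
    complexEllipticK_ofReal_of_lt_one (by linarith [hx.1])]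
  simp only [pow_two, neg_sub, Complex.conj_ofReal, Complex.mul_re, Complex.ofReal_re,
    Complex.ofReal_im, mul_zero, sub_zero, Complex.sub_re, Complex.re_ofNat, Complex.I_re,
    Complex.im_ofNat, Complex.I_im, mul_one, sub_self, Complex.sub_im, Complex.mul_im, add_zero,
    zero_sub, zero_mul, neg_mul, zero_add, one_mul]
  ring

theorem re_ellipticCubicBoundary_neg_add_re_one_add {z : ℝ} (hz : 0 < z) :
    (ellipticCubicBoundary (-z)).re + (ellipticCubicBoundary (1 + z)).re =
      -(legendreP z ^ 2 * legendreQ 0 z) := by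
  have hneg : complexEllipticK (-z : ℝ) = legendreP z := by
    rw [complexEllipticK_ofReal_of_lt_one (by linarith), neg_neg]
  rw [ellipticCubicBoundary, ellipticCubicBoundary, sub_neg_eq_add, sub_add_cancel_left, hneg,
    complexEllipticK_one_add hz]
  simp only [pow_two, map_sub, Complex.conj_ofReal, map_mul, Complex.conj_I, neg_mul,
    sub_neg_eq_add, Complex.mul_re, Complex.ofReal_re, Complex.ofReal_im, mul_zero, sub_zero,
    Complex.sub_re, Complex.re_ofNat, Complex.I_re, Complex.im_ofNat, Complex.I_im, mul_one,
    sub_self, Complex.add_re, zero_mul, add_zero, Complex.sub_im, Complex.mul_im, zero_sub,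
    Complex.add_im, one_mul, zero_add, mul_neg, neg_neg, neg_zero]
  ring

theorem integral_eq_setIntegral_Ioi_add_intervalIntegral {E : Type*} [NormedAddCommGroup E]
    [NormedSpace ℝ E] {f : ℝ → E} (hf : Integrable f) :
    ∫ x, f x = (∫ z in Ioi 0, (f (-z) + f (1 + z))) + ∫ x in (0 : ℝ)..1, f x := by
  have hleft : ∫ z in Ioi 0, f (-z) = ∫ x in Iic 0, f x := by
    rw [integral_comp_neg_Ioi, neg_zero]
  have hright : ∫ z in Ioi 0, f (1 + z) = ∫ x in Ioi 1, f x := by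
    have h := (measurePreserving_add_left volume (1 : ℝ)).setIntegral_preimage_emb
      (MeasurableEquiv.addLeft (1 : ℝ)).measurableEmbedding f (Ioi 1)
    rwa [preimage_const_add_Ioi, sub_self] at h
  rw [MeasureTheory.integral_add hf.comp_neg.integrableOn (hf.comp_add_left 1).integrableOn,
    hleft, hright, integral_of_le zero_le_one, add_assoc, add_comm (∫ x in Ioi 1, f x),
    ← setIntegral_union (Ioc_disjoint_Ioi le_rfl) measurableSet_Ioi hf.integrableOn
      hf.integrableOn, Ioc_union_Ioi_eq_Ioi zero_le_one,
    integral_Iic_add_Ioi hf.integrableOn hf.integrableOn]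

theorem three_mul_integral_legendreP_sq_mul_legendreP :
    3 * ∫ x in (0 : ℝ)..1, legendreP (-x) ^ 2 * legendreP (-(1 - x)) = legendreMoment 0 := by
  obtain ⟨hint, hzero⟩ := integrable_and_integral_ellipticCubicBoundary
  have hre : ∫ x, (ellipticCubicBoundary x).re = 0 := by
    rw [← Complex.zero_re, ← hzero]
    exact integral_re hint
  have houter : ∫ z in Ioi 0, ((ellipticCubicBoundary (-z)).re +
      (ellipticCubicBoundary (1 + z)).re) = -legendreMoment 0 := by
    rw [legendreMoment, ← MeasureTheory.integral_neg]
    exact setIntegral_congr_fun measurableSet_Ioi fun z hz ↦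
      re_ellipticCubicBoundary_neg_add_re_one_add hz
  have hinner : ∫ x in (0 : ℝ)..1, (ellipticCubicBoundary x).re =
      3 * ∫ x in (0 : ℝ)..1, legendreP (-x) ^ 2 * legendreP (-(1 - x)) := by
    rw [← intervalIntegral.integral_const_mul, integral_of_le zero_le_one,
      integral_of_le zero_le_one, integral_Ioc_eq_integral_Ioo, integral_Ioc_eq_integral_Ioo]
    exact setIntegral_congr_fun measurableSet_Ioo fun x hx ↦ re_ellipticCubicBoundary_of_mem_Ioo hx
  rw [integral_eq_setIntegral_Ioi_add_intervalIntegral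
    (f := fun x ↦ (ellipticCubicBoundary x).re) hint.re] at hre
  linarith

end Cubic

theorem ellipticK_sqrt {t : ℝ} (ht : 0 ≤ t) : ellipticK (√t) = legendreP (-t) := by
  rw [ellipticK, sq_sqrt ht, legendreP_neg]

end

theorem stmt_7 :
    2 * ∫ t in (0:ℝ)..1, (ellipticK (Real.sqrt (1-t)))^2 * ellipticK (Real.sqrt t)
      = (Real.Gamma (1/4))^8 / (192 * π^2) := by
  have hreflect : ∫ t in (0 : ℝ)..1, ellipticK √(1 - t) ^ 2 * ellipticK √t =
      ∫ x in (0 : ℝ)..1, ellipticK √x ^ 2 * ellipticK √(1 - x) := by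
    simpa using integral_comp_sub_left (a := 0) (b := 1)
      (fun x ↦ ellipticK √x ^ 2 * ellipticK √(1 - x)) 1
  have hlegendre : ∫ x in (0 : ℝ)..1, ellipticK √x ^ 2 * ellipticK √(1 - x) =
      ∫ x in (0 : ℝ)..1, legendreP (-x) ^ 2 * legendreP (-(1 - x)) := by
    refine integral_congr fun x hx ↦ ?_
    rw [Set.uIcc_of_le zero_le_one] at hx
    simp only [ellipticK_sqrt hx.1, ellipticK_sqrt (sub_nonneg.2 hx.2)]
  have hmoment := three_mul_integral_legendreP_sq_mul_legendreP
  rw [legendreMoment_zero] at hmoment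
  calc 2 * ∫ t in (0 : ℝ)..1, ellipticK √(1 - t) ^ 2 * ellipticK √t
      = 2 / 3 * (Real.Gamma (1 / 4) ^ 8 / (128 * π ^ 2)) := by
        rw [hreflect, hlegendre, ← hmoment]; ring
    _ = Real.Gamma (1 / 4) ^ 8 / (192 * π ^ 2) := by field_simp; norm_num
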